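/- arXiv:1004.2613 — 2 statements merged into one kernel-verified Lean document; each statement's English description precedes it below -/
import Mathlib

section
/- Let F be a number field, d ≥ 1, and T = 𝔾_m^d over F. For any positive integer k, every element of T(F) that lies in [2k]T(F_𝔭) for all finite places 𝔭 of F (with no condition at infinite places) lies in [k]T(F). Equivalently: if x₁, …, x_d ∈ F^× are 2k-th powers in F_𝔭^× for all finite 𝔭, then each x_i is a k-th power in F^×. -/
open IsDedekindDomain NumberField

/-! Let `E / F` be an extension contained in a Galois extension `L / F`, such that for almost all
primes `P` of `L` the decomposition group of `P` fixes `E`. If `E ≠ F`, then almost every prime of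
`F` has two distinct primes of `E` of the same norm above it, so that `ζ_F(s)²` is bounded by a
multiple of `ζ_E(s)` as `s → 1⁺`. This is absurd, as `ζ_F²` has a double pole there and `ζ_E` a
simple one. Hence `E = F`.

Now let `x` be an `n`-th power modulo almost all primes of `F`, and let `L` be Galois over `F` and
contain the roots of `Xⁿ - x`. Modulo such a prime, some root `β` is congruent to an element of `F`,
and the decomposition group fixes `β`. Consequently every `γ` lying in all the fields `F(β)` is in
`F`. This yields an `n`-th root of `x` in `F` if `μₙ ⊆ F`, since then all the `F(β)` coincide, and
more generally if the intermediate fields of `L / F` form a chain, as happens when `n = pᶜ` and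
`L = F(μₙ)` is cyclic over `F` of `p`-power degree. So the claim holds over `F(μ_p)` for odd `p` and
over `F(μ₄)` for `p = 2`; the norm to `F` then shows that `x ^ (p - 1)`, respectively `x ^ 2`, is
an `n`-th power in `F`.

For odd `p` this suffices. For `n = 2 ^ (a + 1)` it gives `x = ± y ^ 2 ^ a`. In the case of the
minus sign, `-1` is a `2 ^ a`-th power modulo almost all primes; the roots of `X ^ 2 ^ a + 1` being
primitive, they all generate the same field, and `-1` is a `2 ^ a`-th power in `F`. -/

section MonomialSum
open scoped ENNReal

variable {ι κ : Type*}

/-- The sum of all monomials in the `w i`, that is, the expanded Euler product `∏ (1 - w i)⁻¹`. -/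
noncomputable def monomialSum (w : ι → ℝ≥0∞) : ℝ≥0∞ :=
  ∑' m : ι →₀ ℕ, m.prod fun i k => w i ^ k

theorem monomialSum_comp_le {f : ι → κ} (hf : f.Injective) (w : κ → ℝ≥0∞) :
    monomialSum (w ∘ f) ≤ monomialSum w := by
  have prod_mapDomain (m : ι →₀ ℕ) :
      (m.mapDomain f).prod (fun i k => w i ^ k) = m.prod fun i k => (w ∘ f) i ^ k :=
    Finsupp.prod_mapDomain_index_inj hf
  simp only [monomialSum, ← prod_mapDomain]
  exact ENNReal.tsum_comp_le_tsum_of_injective (Finsupp.mapDomain_injective hf)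
    fun m => m.prod fun i k => w i ^ k

theorem monomialSum_comp_equiv (e : ι ≃ κ) (w : κ → ℝ≥0∞) :
    monomialSum (w ∘ e) = monomialSum w := by
  refine (monomialSum_comp_le e.injective w).antisymm ?_
  simpa [Function.comp_assoc] using monomialSum_comp_le e.symm.injective (w ∘ e)

theorem monomialSum_sumElim (w : ι → ℝ≥0∞) (w' : κ → ℝ≥0∞) :
    monomialSum (Sum.elim w w') = monomialSum w * monomialSum w' := by
  rw [monomialSum, ← Finsupp.sumFinsuppEquivProdFinsupp.symm.tsum_eq, ENNReal.tsum_prod',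
    monomialSum, ← ENNReal.tsum_mul_right]
  refine tsum_congr fun m => ?_
  rw [monomialSum, ← ENNReal.tsum_mul_left]
  exact tsum_congr fun m' => by
    simp [Finsupp.sumFinsuppEquivProdFinsupp, Finsupp.prod_sumElim, Function.comp_def]

theorem monomialSum_of_isEmpty [IsEmpty ι] (w : ι → ℝ≥0∞) : monomialSum w = 1 := by
  simp [monomialSum]

theorem monomialSum_of_unique [Unique ι] (w : ι → ℝ≥0∞) :
    monomialSum w = (1 - w default)⁻¹ := by
  rw [← ENNReal.tsum_geometric, monomialSum,
    ← (Finsupp.uniqueEquiv (M := ℕ) (default : ι)).tsum_eq]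
  refine tsum_congr fun m => ?_
  rw [Finsupp.prod_fintype _ _ fun _ => pow_zero _]
  simp

theorem monomialSum_le_two_pow_card [Finite ι] {w : ι → ℝ≥0∞} (hw : ∀ i, w i ≤ 2⁻¹) :
    monomialSum w ≤ 2 ^ Nat.card ι := by
  induction ι using Finite.induction_empty_option with
  | of_equiv e ih =>
    rw [← monomialSum_comp_equiv e, ← Nat.card_congr e]
    exact ih fun i => hw _
  | h_empty => simp [monomialSum_of_isEmpty]
  | @h_option ι _ ih =>
    have hgeom : (1 - w none)⁻¹ ≤ 2 := by
      rw [ENNReal.inv_le_iff_inv_le, ← ENNReal.one_sub_inv_two]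
      exact tsub_le_tsub_left (hw none) 1
    rw [← monomialSum_comp_equiv (Equiv.optionEquivSumPUnit.{0} ι).symm,
      ← Sum.elim_comp_inl_inr (w ∘ _), monomialSum_sumElim, monomialSum_of_unique (ι := PUnit),
      Finite.card_option, pow_succ]
    gcongr
    · exact ih fun i => hw _
    · exact hgeom

theorem monomialSum_le_mul_monomialSum_compl {S : Set ι} (hS : S.Finite) {w : ι → ℝ≥0∞}
    (hw : ∀ i, w i ≤ 2⁻¹) :
    monomialSum w ≤ 2 ^ S.ncard * monomialSum fun i : ↥Sᶜ => w i := by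
  classical
  have := hS.to_subtype
  rw [← monomialSum_comp_equiv (Equiv.Set.sumCompl S), ← Sum.elim_comp_inl_inr (w ∘ _),
    monomialSum_sumElim]
  gcongr ?_ * _
  exact monomialSum_le_two_pow_card fun i => hw _

end MonomialSum

section IdealZeta
open scoped ComplexOrder ENNReal Topology
open Filter UniqueFactorizationMonoid

theorem bijOn_prod_asIdeal_pow (R : Type*) [CommRing R] [IsDedekindDomain R] :
    Set.BijOn (fun m : HeightOneSpectrum R →₀ ℕ => m.prod fun v k => v.asIdeal ^ k)
      Set.univ {⊥}ᶜ := by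
  have prod_eq (m : HeightOneSpectrum R →₀ ℕ) : (m.prod fun v k => v.asIdeal ^ k) =
      (m.toMultiset.map HeightOneSpectrum.asIdeal).prod := by
    simp [Finsupp.toMultiset_map, Finsupp.prod_toMultiset, Finsupp.prod_mapDomain_index, pow_add]
  have prime_asIdeal (m : HeightOneSpectrum R →₀ ℕ) :
      ∀ I ∈ m.toMultiset.map HeightOneSpectrum.asIdeal, Prime I := by
    rintro I hI
    obtain ⟨v, -, rfl⟩ := Multiset.mem_map.1 hI
    exact v.prime
  refine ⟨fun m _ => ?_, fun m _ m' _ h => ?_, fun I hI => ?_⟩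
  · refine (prod_eq m).trans_ne ?_
    exact Multiset.prod_ne_zero fun h => (prime_asIdeal m 0 h).ne_zero rfl
  · have h' := congrArg normalizedFactors ((prod_eq m).symm.trans (h.trans (prod_eq m')))
    rw [normalizedFactors_prod_of_prime (prime_asIdeal m),
      normalizedFactors_prod_of_prime (prime_asIdeal m')] at h'
    classical
    exact (Multiset.toFinsupp (α := HeightOneSpectrum R)).symm.injective
      (Multiset.map_injective (fun v w => HeightOneSpectrum.ext) h')
  · rw [Set.image_univ]
    induction I using induction_on_prime with
    | h₁ => exact absurd rfl hI
    | h₂ I hunit => exact ⟨0, Finsupp.prod_zero_index.trans (isUnit_iff_eq_one.1 hunit).symm⟩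
    | h₃ I P hI0 hP ih =>
      obtain ⟨m, rfl⟩ := ih hI0
      refine ⟨.single ⟨P, Ideal.isPrime_of_prime hP, hP.ne_zero⟩ 1 + m, ?_⟩
      simp [Finsupp.prod_add_index', pow_add]

variable (K : Type*) [Field K] [NumberField K]

/-- The Dedekind zeta function as a sum over ideals in `ℝ≥0∞`, where it needs no convergence. -/
noncomputable def idealZeta (s : ℝ) : ℝ≥0∞ :=
  ∑' I : ({⊥}ᶜ : Set (Ideal (𝓞 K))), (Ideal.absNorm I.1 : ℝ≥0∞) ^ (-s)

theorem idealZeta_eq_monomialSum (s : ℝ) :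
    idealZeta K s =
      monomialSum fun v : HeightOneSpectrum (𝓞 K) => (Ideal.absNorm v.asIdeal : ℝ≥0∞) ^ (-s) := by
  have hbij := bijOn_prod_asIdeal_pow (𝓞 K)
  rw [idealZeta, ← hbij.image_eq,
    tsum_image (fun I : Ideal (𝓞 K) => (Ideal.absNorm I : ℝ≥0∞) ^ (-s)) hbij.injOn,
    tsum_univ fun m : HeightOneSpectrum (𝓞 K) →₀ ℕ =>
      (Ideal.absNorm (m.prod fun v k => v.asIdeal ^ k) : ℝ≥0∞) ^ (-s)]
  refine tsum_congr fun m => ?_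
  simp only [Finsupp.prod, map_prod, map_pow, Nat.cast_prod, Nat.cast_pow]
  rw [← ENNReal.prod_rpow_of_ne_top fun v _ => by finiteness]
  refine Finset.prod_congr rfl fun v _ => ?_
  rw [← ENNReal.rpow_natCast, ← ENNReal.rpow_natCast, ← ENNReal.rpow_mul, ← ENNReal.rpow_mul,
    mul_comm]

theorem idealZeta_eq_tsum_enorm_term (s : ℝ) :
    idealZeta K s = ∑' n, ‖LSeries.term
      (fun n => (Nat.card {I : Ideal (𝓞 K) // Ideal.absNorm I = n} : ℂ)) s n‖ₑ := by
  rw [idealZeta, ← ENNReal.tsum_fiberwise _ fun I => Ideal.absNorm I.1]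
  refine tsum_congr fun n => ?_
  set fiber := (fun I : ({⊥}ᶜ : Set (Ideal (𝓞 K))) => Ideal.absNorm I.1) ⁻¹' {n}
  have fiber_const (I : fiber) : (Ideal.absNorm I.1.1 : ℝ≥0∞) ^ (-s) = (n : ℝ≥0∞) ^ (-s) :=
    congrArg (fun k : ℕ => (k : ℝ≥0∞) ^ (-s)) I.2
  rw [tsum_congr fiber_const, ENNReal.tsum_const]
  rcases eq_or_ne n 0 with rfl | hn
  · have fiber_eq : fiber = ∅ :=
      Set.eq_empty_of_forall_notMem fun I hI => I.2 (Ideal.absNorm_eq_zero_iff.1 hI)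
    simp [fiber_eq]
  · have : Finite {I : Ideal (𝓞 K) // Ideal.absNorm I = n} :=
      (Ideal.finite_setOfPred_absNorm_eq (S := 𝓞 K) n).to_subtype
    have card_fiber : ENat.card fiber = Nat.card {I : Ideal (𝓞 K) // Ideal.absNorm I = n} :=
      (ENat.card_congr (Equiv.subtypeSubtypeEquivSubtype fun {I} (hI : Ideal.absNorm I = n)
        (h : I = ⊥) => hn (by rw [← hI, h, Ideal.absNorm_bot]))).trans (ENat.card_eq_coe_natCard _)
    rw [← ofReal_norm, LSeries.norm_term_eq, if_neg hn, Complex.norm_natCast, Complex.ofReal_re,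
      div_eq_mul_inv, ← Real.rpow_neg n.cast_nonneg, ENNReal.ofReal_mul (Nat.cast_nonneg _),
      ← ENNReal.ofReal_rpow_of_pos (by positivity), ENNReal.ofReal_natCast,
      ENNReal.ofReal_natCast, card_fiber, ENat.toENNReal_coe]

theorem tendsto_sub_one_mul_idealZeta :
    Tendsto (fun s : ℝ => ENNReal.ofReal (s - 1) * idealZeta K s) (𝓝[>] 1)
      (𝓝 (ENNReal.ofReal (dedekindZeta_residue K))) := by
  have hlim := tendsto_sub_one_mul_dedekindZeta_nhdsGT K
  have hlim' := hlim.enorm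
  rw [← ofReal_norm, Complex.norm_of_nonneg (dedekindZeta_residue_pos K).le] at hlim'
  refine hlim'.congr' ?_
  filter_upwards [self_mem_nhdsWithin,
    hlim.eventually_ne (Complex.ofReal_ne_zero.2 (dedekindZeta_residue_ne_zero K))] with s hs hne
  set t := LSeries.term
    (fun n => (Nat.card {I : Ideal (𝓞 K) // Ideal.absNorm I = n} : ℂ)) s
  -- The junk value `0` of a divergent series is excluded by `hne`.
  have summable_t : Summable t := by
    by_contra h
    exact hne (by rw [dedekindZeta, LSeries, tsum_eq_zero_of_not_summable h, mul_zero])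
  have norm_t (n : ℕ) : (‖t n‖ : ℂ) = t n :=
    Complex.norm_of_nonneg' (LSeries.term_nonneg (by simp) s)
  have enorm_zeta : ‖dedekindZeta K s‖ₑ = ∑' n, ‖t n‖ₑ := by
    calc ‖dedekindZeta K s‖ₑ = ‖((∑' n, ‖t n‖ : ℝ) : ℂ)‖ₑ := by
          rw [Complex.ofReal_tsum, tsum_congr norm_t]; rfl
      _ = ENNReal.ofReal (∑' n, ‖t n‖) := by
          rw [← ofReal_norm, Complex.norm_of_nonneg (tsum_nonneg fun n => norm_nonneg _)]
      _ = ∑' n, ‖t n‖ₑ := by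
          rw [ENNReal.ofReal_tsum_of_nonneg (fun n => norm_nonneg _) summable_t.norm]
          simp only [ofReal_norm]
  have enorm_sub_one : ‖(s - 1 : ℂ)‖ₑ = ENNReal.ofReal (s - 1) := by
    rw [← ofReal_norm, ← Complex.ofReal_one, ← Complex.ofReal_sub,
      Complex.norm_of_nonneg (sub_nonneg.2 (le_of_lt hs))]
  rw [enorm_mul, enorm_sub_one, enorm_zeta, idealZeta_eq_tsum_enorm_term]

end IdealZeta

section TwoPrimes
open scoped ENNReal Topology
open Filter

variable {F L : Type*} [Field F] [NumberField F] [Field L] [NumberField L]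

theorem absNorm_rpow_neg_le_inv_two (v : HeightOneSpectrum (𝓞 F)) {s : ℝ} (hs : 1 ≤ s) :
    (Ideal.absNorm v.asIdeal : ℝ≥0∞) ^ (-s) ≤ 2⁻¹ := by
  have two_le : (2 : ℝ≥0∞) ≤ Ideal.absNorm v.asIdeal :=
    mod_cast NumberField.HeightOneSpectrum.one_lt_absNorm v
  rw [ENNReal.rpow_neg]
  gcongr
  exact two_le.trans (ENNReal.le_rpow_self_of_one_le (one_le_two.trans two_le) hs)

theorem idealZeta_sq_le {S : Set (HeightOneSpectrum (𝓞 F))} (hS : S.Finite)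
    {P : ↥Sᶜ ⊕ ↥Sᶜ → HeightOneSpectrum (𝓞 L)} (hP : P.Injective)
    (hnorm : ∀ v, Ideal.absNorm (P v).asIdeal =
      Ideal.absNorm (Sum.elim Subtype.val Subtype.val v : HeightOneSpectrum (𝓞 F)).asIdeal)
    {s : ℝ} (hs : 1 ≤ s) : idealZeta F s ^ 2 ≤ 4 ^ S.ncard * idealZeta L s := by
  set w : HeightOneSpectrum (𝓞 F) → ℝ≥0∞ := fun v => (Ideal.absNorm v.asIdeal : ℝ≥0∞) ^ (-s)
  set w' : HeightOneSpectrum (𝓞 L) → ℝ≥0∞ := fun v => (Ideal.absNorm v.asIdeal : ℝ≥0∞) ^ (-s)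
  have comp_P : w' ∘ P = Sum.elim (fun v : ↥Sᶜ => w v) fun v : ↥Sᶜ => w v := by
    ext v
    rcases v with v | v <;> simp [w, w', hnorm]
  calc idealZeta F s ^ 2 = monomialSum w ^ 2 := by rw [idealZeta_eq_monomialSum]
    _ ≤ (2 ^ S.ncard * monomialSum fun v : ↥Sᶜ => w v) ^ 2 := by
        gcongr
        exact monomialSum_le_mul_monomialSum_compl hS fun v => absNorm_rpow_neg_le_inv_two v hs
    _ = 4 ^ S.ncard * monomialSum (w' ∘ P) := by
        rw [comp_P, monomialSum_sumElim, mul_pow, ← pow_mul, mul_comm _ 2, pow_mul,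
          sq (monomialSum _)]
        norm_num
    _ ≤ 4 ^ S.ncard * idealZeta L s := by
        rw [idealZeta_eq_monomialSum]
        gcongr
        exact monomialSum_comp_le hP w'

theorem not_forall_idealZeta_sq_le {C : ℝ≥0∞} (hC : C ≠ ∞) :
    ¬ ∀ s > 1, idealZeta F s ^ 2 ≤ C * idealZeta L s := by
  intro hle
  let ε : ℝ → ℝ≥0∞ := fun s => ENNReal.ofReal (s - 1)
  have hF := tendsto_sub_one_mul_idealZeta F
  have hL := tendsto_sub_one_mul_idealZeta L
  have hε : Tendsto ε (𝓝[>] 1) (𝓝 0) :=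
    tendsto_nhdsWithin_of_tendsto_nhds <| by
      simpa using ENNReal.tendsto_ofReal ((tendsto_id (x := 𝓝 (1 : ℝ))).sub_const 1)
  have hleft := ENNReal.Tendsto.pow hF (n := 2)
  have hright := ENNReal.Tendsto.const_mul (a := C)
    (ENNReal.Tendsto.mul hε (Or.inr ENNReal.ofReal_ne_top) hL (Or.inr ENNReal.zero_ne_top))
    (Or.inr hC)
  have hbound := le_of_tendsto_of_tendsto hleft hright <| by
    filter_upwards [self_mem_nhdsWithin] with s hs
    calc (ε s * idealZeta F s) ^ 2 = ε s ^ 2 * idealZeta F s ^ 2 := mul_pow _ _ _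
      _ ≤ ε s ^ 2 * (C * idealZeta L s) := by gcongr; exact hle s hs
      _ = C * (ε s * (ε s * idealZeta L s)) := by ring
  rw [zero_mul, mul_zero, nonpos_iff_eq_zero, pow_eq_zero_iff two_ne_zero,
    ENNReal.ofReal_eq_zero] at hbound
  exact hbound.not_gt (dedekindZeta_residue_pos F)

variable (F L) in
theorem not_eventually_exists_two_primes_absNorm_eq [Algebra F L] :
    ¬ ∀ᶠ v : HeightOneSpectrum (𝓞 F) in cofinite, ∃ P Q : HeightOneSpectrum (𝓞 L), P ≠ Q ∧
      (P.asIdeal.LiesOver v.asIdeal ∧ Ideal.absNorm P.asIdeal = Ideal.absNorm v.asIdeal) ∧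
      (Q.asIdeal.LiesOver v.asIdeal ∧ Ideal.absNorm Q.asIdeal = Ideal.absNorm v.asIdeal) := by
  intro h
  obtain ⟨S, hS, hsplit⟩ := hasBasis_cofinite.eventually_iff.1 h
  choose P Q hPQ hP hQ using fun v : ↥Sᶜ => hsplit v.2
  have eq_of_eq {v w : HeightOneSpectrum (𝓞 F)} {I : Ideal (𝓞 L)} (hv : I.LiesOver v.asIdeal)
      (hw : I.LiesOver w.asIdeal) : v = w := HeightOneSpectrum.ext (hv.over.trans hw.over.symm)
  have injective_elim : (Sum.elim P Q).Injective := by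
    refine Function.Injective.sumElim ?_ ?_ ?_
    · exact fun v w h => Subtype.ext (eq_of_eq (hP v).1 (h ▸ (hP w).1))
    · exact fun v w h => Subtype.ext (eq_of_eq (hQ v).1 (h ▸ (hQ w).1))
    · intro v w h
      obtain rfl : v = w := Subtype.ext (eq_of_eq (hP v).1 (h ▸ (hQ w).1))
      exact hPQ v h
  refine not_forall_idealZeta_sq_le (F := F) (L := L) (C := 4 ^ S.ncard) (by finiteness)
    fun s hs => idealZeta_sq_le hS injective_elim ?_ hs.le
  rintro (v | v)
  exacts [(hP v).2, (hQ v).2]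

end TwoPrimes

section Decomposition
open Filter MulAction
open scoped Pointwise

theorem exists_algebraMap_sub_mem_of_forall_stabilizer_smul_eq {A B G : Type*} [CommRing A]
    [CommRing B] [Algebra A B] [Group G] [Finite G] [MulSemiringAction G B] [SMulCommClass G A B]
    [Algebra.IsInvariant A B G] (p : Ideal A) (P : Ideal B) [P.LiesOver p]
    [p.IsMaximal] [P.IsMaximal] [Finite (B ⧸ P)] {b : B} (hb : ∀ σ ∈ stabilizer G P, σ • b = b) :
    ∃ a : A, algebraMap A B a - b ∈ P := by
  let _ := Ideal.Quotient.field p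
  let _ := Ideal.Quotient.field P
  have fixed (τ : Gal((B ⧸ P)/(A ⧸ p))) : τ (Ideal.Quotient.mk P b) = Ideal.Quotient.mk P b := by
    obtain ⟨σ, rfl⟩ := Ideal.Quotient.stabilizerHom_surjective G p P τ
    exact congrArg (Ideal.Quotient.mk P) (hb σ σ.2)
  obtain ⟨a, ha⟩ := (IsGalois.mem_range_algebraMap_iff_fixed (F := A ⧸ p) _).2 fixed
  obtain ⟨a, rfl⟩ := Ideal.Quotient.mk_surjective a
  exact ⟨a, Ideal.Quotient.eq.1 ha⟩

variable {F L : Type*} [Field F] [NumberField F] [Field L] [NumberField L] [Algebra F L]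
  [IsGalois F L] {E : IntermediateField F L}

theorem absNorm_under_eq_of_stabilizer_le {v : HeightOneSpectrum (𝓞 F)} {P : Ideal (𝓞 L)}
    [P.IsMaximal] [P.LiesOver v.asIdeal] (hP : stabilizer Gal(L/F) P ≤ E.fixingSubgroup) :
    Ideal.absNorm (P.under (𝓞 E)) = Ideal.absNorm v.asIdeal := by
  have := v.isMaximal
  have := Ideal.finiteQuotientOfFreeOfNeBot _ (Ideal.ne_bot_of_liesOver_of_ne_bot v.ne_bot P)
  let _ := Ideal.Quotient.field v.asIdeal
  have surj : Function.Surjective (algebraMap (𝓞 F ⧸ v.asIdeal) (𝓞 E ⧸ P.under (𝓞 E))) := by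
    intro x
    obtain ⟨x, rfl⟩ := Ideal.Quotient.mk_surjective x
    obtain ⟨y, hy⟩ := exists_algebraMap_sub_mem_of_forall_stabilizer_smul_eq (G := Gal(L/F))
      v.asIdeal P (b := algebraMap (𝓞 E) (𝓞 L) x) fun σ hσ => RingOfIntegers.ext (hP hσ x)
    refine ⟨Ideal.Quotient.mk _ y, Ideal.Quotient.eq.2 ?_⟩
    rwa [Ideal.mem_comap, map_sub, ← IsScalarTower.algebraMap_apply]
  rw [Ideal.absNorm_apply, Ideal.absNorm_apply, Submodule.cardQuot_apply, Submodule.cardQuot_apply]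
  exact (Nat.card_congr (Equiv.ofBijective _ ⟨RingHom.injective _, surj⟩)).symm

theorem under_smul_ne_of_stabilizer_le {P : Ideal (𝓞 L)} [P.IsPrime]
    (hP : stabilizer Gal(L/F) P ≤ E.fixingSubgroup) {σ : Gal(L/F)} (hσ : σ ∉ E.fixingSubgroup) :
    (σ • P).under (𝓞 E) ≠ P.under (𝓞 E) := by
  intro h
  obtain ⟨τ, hτ⟩ := Algebra.IsInvariant.exists_smul_of_under_eq (𝓞 E) (𝓞 L) Gal(L/E) _ _ h.symm
  let τ' : Gal(L/F) := τ.restrictScalars F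
  have τ_mem : τ' ∈ E.fixingSubgroup := fun x => τ.commutes x
  have inv_mul_mem : τ'⁻¹ * σ ∈ stabilizer Gal(L/F) P := by
    rw [mem_stabilizer_iff, mul_smul, inv_smul_eq_iff]
    exact hτ
  exact hσ ((Subgroup.mul_mem_cancel_left _ (inv_mem τ_mem)).1 (hP inv_mul_mem))

theorem eq_bot_of_eventually_stabilizer_le_fixingSubgroup
    (h : ∀ᶠ v : HeightOneSpectrum (𝓞 F) in cofinite, ∀ P ∈ v.asIdeal.primesOver (𝓞 L),
      stabilizer Gal(L/F) P ≤ E.fixingSubgroup) :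
    E = ⊥ := by
  by_contra hE
  obtain ⟨σ, hσ⟩ : ∃ σ, σ ∉ E.fixingSubgroup := by
    by_contra! hmem
    refine hE ?_
    rw [← IsGalois.fixedField_fixingSubgroup E, (Subgroup.eq_top_iff' _).2 hmem,
      ← IntermediateField.fixingSubgroup_bot, IsGalois.fixedField_fixingSubgroup]
  refine not_eventually_exists_two_primes_absNorm_eq F E (h.mono fun v hv => ?_)
  have exists_below (Q : Ideal (𝓞 L)) [Q.IsPrime] [Q.LiesOver v.asIdeal] :
      ∃ w : HeightOneSpectrum (𝓞 E), w.asIdeal = Q.under (𝓞 E) ∧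
        w.asIdeal.LiesOver v.asIdeal ∧ Ideal.absNorm w.asIdeal = Ideal.absNorm v.asIdeal := by
    have := v.isMaximal
    have hQ : Q ∈ v.asIdeal.primesOver (𝓞 L) := ⟨inferInstance, inferInstance⟩
    have := Ideal.isMaximal_of_mem_primesOver hQ
    have := Ideal.under_liesOver_of_liesOver (𝓞 E) Q v.asIdeal
    exact ⟨⟨Q.under (𝓞 E), inferInstance, Ideal.ne_bot_of_liesOver_of_ne_bot v.ne_bot _⟩, rfl,
      this, absNorm_under_eq_of_stabilizer_le (hv Q hQ)⟩
  obtain ⟨⟨P, hP⟩⟩ : Nonempty (v.asIdeal.primesOver (𝓞 L)) := inferInstance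
  obtain ⟨_, _⟩ := id hP
  obtain ⟨w, hw, hw'⟩ := exists_below P
  obtain ⟨wσ, hwσ, hwσ'⟩ := exists_below (σ • P)
  refine ⟨wσ, w, fun h => under_smul_ne_of_stabilizer_le (hv P hP) hσ ?_, hwσ', hw'⟩
  rw [← hw, ← hwσ, h]

end Decomposition

section PowModAlmostAll
open Filter MulAction
open scoped Pointwise IntermediateField

/-- `x` is an `n`-th power in the residue field of all but finitely many primes of `𝓞 F`. -/
def IsPowModAlmostAll {F : Type*} [Field F] (n : ℕ) (x : 𝓞 F) : Prop :=
  ∀ᶠ v : HeightOneSpectrum (𝓞 F) in cofinite, ∃ y : 𝓞 F, y ^ n - x ∈ v.asIdeal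

theorem eventually_notMem_asIdeal {R : Type*} [CommRing R] [IsDedekindDomain R] {x : R}
    (hx : x ≠ 0) : ∀ᶠ v : HeightOneSpectrum R in cofinite, x ∉ v.asIdeal := by
  refine (Ideal.finite_factors (I := Ideal.span {x}) (by simpa using hx)).subset fun v hv => ?_
  simpa [Ideal.dvd_span_singleton] using hv

theorem eq_of_pow_eq_pow_of_sub_mem {R : Type*} [CommRing R] [IsDomain R] {P : Ideal R} [P.IsPrime]
    {n : ℕ} {a b : R} (hn : (n : R) ∉ P) (hb : b ∉ P) (hpow : a ^ n = b ^ n) (hab : a - b ∈ P) :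
    a = b := by
  by_contra hne
  have sum_eq_zero : ∑ i ∈ Finset.range n, a ^ i * b ^ (n - 1 - i) = 0 := by
    have := (Commute.all a b).mul_geom_sum₂ n
    rw [hpow, sub_self] at this
    exact (mul_eq_zero.1 this).resolve_left (sub_ne_zero.2 hne)
  have deriv_mem : (n : R) * b ^ (n - 1) ∈ P := by
    rw [← Ideal.Quotient.eq_zero_iff_mem, map_mul, map_natCast, map_pow, ← geom_sum₂_self,
      ← map_zero (Ideal.Quotient.mk P), ← sum_eq_zero, map_sum]
    simp only [map_mul, map_pow, Ideal.Quotient.eq.2 hab]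
  exact (‹P.IsPrime›.mem_or_mem deriv_mem).elim hn fun h => hb (‹P.IsPrime›.mem_of_pow_mem _ h)

theorem exists_pow_eq_and_forall_stabilizer_smul_eq {A B G : Type*} [CommRing A] [CommRing B]
    [IsDomain B] [Algebra A B] [Group G] [MulSemiringAction G B] [SMulCommClass G A B]
    {p : Ideal A} {P : Ideal B} [P.IsPrime] [P.LiesOver p] {n : ℕ} {x y : A} {ζ α : B}
    (hζ : IsPrimitiveRoot ζ n) (hα : α ^ n = algebraMap A B x) (hn : (n : A) ∉ p) (hx : x ∉ p)
    (hy : y ^ n - x ∈ p) :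
    ∃ β : B, β ^ n = algebraMap A B x ∧ ∀ σ ∈ stabilizer G P, σ • β = β := by
  have n_pos : 0 < n := Nat.pos_of_ne_zero (by rintro rfl; simp at hn)
  have : NeZero n := ⟨n_pos.ne'⟩
  obtain ⟨η, hη, hmem⟩ : ∃ η ∈ Polynomial.nthRootsFinset n (1 : B),
      algebraMap A B y - η * α ∈ P := by
    rw [← ‹P.IsPrime›.prod_mem_iff, ← hζ.pow_sub_pow_eq_prod_sub_mul _ _ n_pos, hα, ← map_pow,
      ← map_sub]
    exact (Ideal.mem_of_liesOver P p _).1 hy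
  have hβ : (η * α) ^ n = algebraMap A B x := by
    rw [mul_pow, (Polynomial.mem_nthRootsFinset n_pos _).1 hη, one_mul, hα]
  refine ⟨η * α, hβ, fun σ hσ => ?_⟩
  refine eq_of_pow_eq_pow_of_sub_mem (P := P) (n := n) ?_ ?_ ?_ ?_
  · rwa [← map_natCast (algebraMap A B), ← Ideal.mem_of_liesOver P p]
  · refine fun h => hx ((Ideal.mem_of_liesOver P p _).2 ?_)
    rw [← hβ]
    exact P.pow_mem_of_mem h n n_pos
  · rw [← smul_pow', hβ, smul_algebraMap]
  · have smul_mem := Ideal.smul_mem_pointwise_smul σ _ P hmem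
    rw [mem_stabilizer_iff.1 hσ, smul_sub, smul_algebraMap] at smul_mem
    simpa using P.sub_mem hmem smul_mem

theorem IsPowModAlmostAll.of_dvd {F : Type*} [Field F] {m n : ℕ} {x : 𝓞 F}
    (h : IsPowModAlmostAll n x) (hmn : m ∣ n) : IsPowModAlmostAll m x := by
  obtain ⟨l, rfl⟩ := hmn
  refine Eventually.mono h fun v ⟨y, hy⟩ => ⟨y ^ l, ?_⟩
  rwa [← pow_mul, mul_comm l]

variable {F : Type*} [Field F] [NumberField F] {n : ℕ} {x : 𝓞 F}

theorem IsPowModAlmostAll.map_algebraMap {K : Type*} [Field K] [NumberField K] [Algebra F K]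
    (h : IsPowModAlmostAll n x) : IsPowModAlmostAll n (algebraMap (𝓞 F) (𝓞 K) x) := by
  have tendsto_under : Tendsto (HeightOneSpectrum.under (𝓞 F) (B := 𝓞 K)) cofinite cofinite :=
    Tendsto.cofinite_of_finite_preimage_singleton fun v => by
      have := v.isMaximal
      refine ((IsDedekindDomain.primesOver_finite v.asIdeal (𝓞 K)).preimage
        HeightOneSpectrum.asIdeal_injective.injOn).subset fun w hw => ?_
      obtain rfl : w.under (𝓞 F) = v := hw
      exact ⟨w.isPrime, ⟨rfl⟩⟩
  refine (tendsto_under.eventually h).mono fun w ⟨y, hy⟩ =>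
    ⟨algebraMap (𝓞 F) (𝓞 K) y, ?_⟩
  simpa only [map_sub, map_pow] using Ideal.mem_comap.1 hy

variable [NeZero n]

section Galois

variable {L : Type*} [Field L] [NumberField L] [Algebra F L] [IsGalois F L] {ζ α : L}

theorem IsPowModAlmostAll.exists_algebraMap_eq_of_forall_mem_adjoin (h : IsPowModAlmostAll n x)
    (hx : x ≠ 0) (hζ : IsPrimitiveRoot ζ n) (hα : α ^ n = algebraMap F L x) {γ : L}
    (hγ : ∀ β : L, β ^ n = algebraMap F L x → γ ∈ F⟮β⟯) :
    ∃ y : F, algebraMap F L y = γ := by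
  have isIntegral_α : IsIntegral ℤ α :=
    .of_pow (NeZero.pos n) (hα ▸ x.isIntegral_coe.algebraMap)
  have hα' : (⟨α, isIntegral_α⟩ : 𝓞 L) ^ n = algebraMap (𝓞 F) (𝓞 L) x := RingOfIntegers.ext hα
  have n_ne_zero : (n : 𝓞 F) ≠ 0 := NeZero.ne _
  suffices F⟮γ⟯ = ⊥ by
    rwa [IntermediateField.adjoin_simple_eq_bot_iff, IntermediateField.mem_bot] at this
  apply eq_bot_of_eventually_stabilizer_le_fixingSubgroup
  filter_upwards [h, eventually_notMem_asIdeal n_ne_zero, eventually_notMem_asIdeal hx]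
    with v ⟨y, hy⟩ hnv hxv P ⟨_, _⟩
  obtain ⟨β, hβ, fixed⟩ := exists_pow_eq_and_forall_stabilizer_smul_eq (G := Gal(L/F)) (P := P)
    hζ.toInteger_isPrimitiveRoot hα' hnv hxv hy
  refine (IntermediateField.le_iff_le _ _).1 ?_
  calc F⟮γ⟯ ≤ F⟮(β : L)⟯ := by
        rw [IntermediateField.adjoin_simple_le_iff]
        exact hγ β (congrArg (algebraMap (𝓞 L) L) hβ)
    _ ≤ IntermediateField.fixedField (stabilizer Gal(L/F) P) := by
        rw [IntermediateField.adjoin_simple_le_iff, IntermediateField.mem_fixedField_iff]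
        exact fun σ hσ => congrArg (algebraMap (𝓞 L) L) (fixed σ hσ)

theorem IsPowModAlmostAll.exists_pow_eq_of_total [Std.Total (α := IntermediateField F L) (· ≤ ·)]
    (h : IsPowModAlmostAll n x) (hx : x ≠ 0) (hζ : IsPrimitiveRoot ζ n)
    (hα : α ^ n = algebraMap F L x) : ∃ y : F, y ^ n = x := by
  obtain ⟨β, hβ, minimal⟩ := exists_minimalFor_of_wellFoundedLT
    (fun β : L => β ^ n = algebraMap F L x) (fun β => Module.finrank F F⟮β⟯) ⟨α, hα⟩
  have β_mem (γ : L) (hγ : γ ^ n = algebraMap F L x) : β ∈ F⟮γ⟯ := by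
    rw [← IntermediateField.adjoin_simple_le_iff]
    obtain hle | hle := total_of (· ≤ ·) F⟮β⟯ F⟮γ⟯
    · exact hle
    · refine (IntermediateField.eq_of_le_of_finrank_le hle ?_).ge
      exact minimal hγ (IntermediateField.finrank_le_of_le_right hle)
  obtain ⟨y, rfl⟩ := h.exists_algebraMap_eq_of_forall_mem_adjoin hx hζ hβ β_mem
  exact ⟨y, (algebraMap F L).injective (by rw [map_pow, hβ])⟩

end Galois

open Polynomial in
theorem IsPowModAlmostAll.exists_pow_eq_of_isPrimitiveRoot (h : IsPowModAlmostAll n x) (hx : x ≠ 0)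
    {ζ : F} (hζ : IsPrimitiveRoot ζ n) : ∃ y : F, y ^ n = x := by
  have x_ne_zero : (x : F) ≠ 0 := RingOfIntegers.coe_ne_zero_iff.2 hx
  let L := (X ^ n - C (x : F)).SplittingField
  have : NumberField L := NumberField.of_module_finite F L
  have : IsGalois F L := .of_separable_splitting_field
    (separable_X_pow_sub_C (x : F) (NeZero.ne (n : F)) x_ne_zero)
  obtain ⟨α, hα⟩ : ∃ α : L, α ^ n = algebraMap F L x := ⟨_, rootOfSplitsXPowSubC_pow (x : F) L⟩
  have map_x_ne_zero : algebraMap F L x ≠ 0 := (_root_.map_ne_zero _).2 x_ne_zero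
  have hζL := hζ.map_of_injective (algebraMap F L).injective
  obtain ⟨y, hy⟩ := h.exists_algebraMap_eq_of_forall_mem_adjoin hx hζL hα (γ := α) fun β hβ => by
    have β_ne_zero : β ≠ 0 := ne_zero_pow (NeZero.ne n) (hβ ▸ map_x_ne_zero)
    obtain ⟨i, -, hi⟩ := hζL.eq_pow_of_pow_eq_one (ξ := α / β) (by
      rw [div_pow, hα, hβ, div_self map_x_ne_zero])
    rw [← div_mul_cancel₀ α β_ne_zero, ← hi, ← map_pow]
    exact mul_mem (algebraMap_mem _ _) (IntermediateField.mem_adjoin_simple_self F β)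
  exact ⟨y, (algebraMap F L).injective (by rw [map_pow, hy, hα])⟩

end PowModAlmostAll

section CyclicGalois

theorem subgroup_le_of_card_dvd_card {G : Type*} [Group G] [IsCyclic G] [Finite G]
    {H K : Subgroup G} (h : Nat.card H ∣ Nat.card K) : H ≤ K := by
  classical
  have := Fintype.ofFinite G
  have K_subset : (K : Set G) ⊆ {g | g ^ Nat.card K = 1} := fun g hg =>
    congrArg Subtype.val (pow_card_eq_one' (x := (⟨g, hg⟩ : K)))
  have card_le : {g : G | g ^ Nat.card K = 1}.ncard ≤ (K : Set G).ncard := by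
    rw [Set.ncard_eq_toFinset_card', Set.toFinset_ofPred]
    exact IsCyclic.card_pow_eq_one_le Nat.card_pos
  have eq := Set.eq_of_subset_of_ncard_le K_subset card_le
  intro g hg
  rw [← SetLike.mem_coe, eq]
  exact orderOf_dvd_iff_pow_eq_one.1 ((Subgroup.orderOf_dvd_natCard H hg).trans h)

theorem subgroup_total_of_isCyclic_of_isPGroup {p : ℕ} [Fact p.Prime] {G : Type*} [Group G]
    [IsCyclic G] [Finite G] (hG : IsPGroup p G) : Std.Total (α := Subgroup G) (· ≤ ·) where
  total H K := by
    obtain ⟨i, hi⟩ := IsPGroup.iff_card.1 (hG.to_subgroup H)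
    obtain ⟨j, hj⟩ := IsPGroup.iff_card.1 (hG.to_subgroup K)
    refine (le_total i j).imp (fun hij => subgroup_le_of_card_dvd_card ?_) fun hij =>
      subgroup_le_of_card_dvd_card ?_
    all_goals rw [hi, hj]; exact pow_dvd_pow p hij

theorem intermediateField_total_of_isCyclic_of_isPGroup {p : ℕ} [Fact p.Prime] {F K : Type*}
    [Field F] [Field K] [Algebra F K] [IsGalois F K] [FiniteDimensional F K] [IsCyclic Gal(K/F)]
    (hG : IsPGroup p Gal(K/F)) : Std.Total (α := IntermediateField F K) (· ≤ ·) where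
  total E E' := by
    have := subgroup_total_of_isCyclic_of_isPGroup hG
    have galois {E E' : IntermediateField F K} (h : E'.fixingSubgroup ≤ E.fixingSubgroup) :
        E ≤ E' := IsGalois.intermediateFieldEquivSubgroup.le_iff_le.1 h
    exact (total_of (· ≤ ·) E'.fixingSubgroup E.fixingSubgroup).imp galois galois

end CyclicGalois

section UnitsMap

theorem card_ker_unitsMap_mul_totient {m n : ℕ} [NeZero n] (h : m ∣ n) :
    Nat.card (ZMod.unitsMap h).ker * m.totient = n.totient := by
  have : NeZero m := ⟨ne_zero_of_dvd_ne_zero (NeZero.ne n) h⟩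
  have card_mul_index := (ZMod.unitsMap h).ker.card_mul_index
  rwa [Subgroup.index_ker, MonoidHom.range_eq_top.2 (ZMod.unitsMap_surjective h),
    Subgroup.card_top, Nat.card_eq_fintype_card (α := (ZMod m)ˣ),
    Nat.card_eq_fintype_card (α := (ZMod n)ˣ), ZMod.card_units_eq_totient,
    ZMod.card_units_eq_totient] at card_mul_index

theorem card_ker_unitsMap_prime_pow {p : ℕ} (hp : p.Prime) {b c : ℕ} (hb : 0 < b)
    (h : p ^ b ∣ p ^ (b + c)) : Nat.card (ZMod.unitsMap h).ker = p ^ c := by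
  have : NeZero (p ^ (b + c)) := ⟨pow_ne_zero _ hp.ne_zero⟩
  refine Nat.eq_of_mul_eq_mul_right (Nat.totient_pos.2 (pow_pos hp.pos b)) ?_
  rw [card_ker_unitsMap_mul_totient h, Nat.totient_prime_pow hp hb,
    Nat.totient_prime_pow hp (by omega), ← mul_assoc, ← pow_add]
  congr 2
  omega

theorem isCyclic_ker_unitsMap_four {c : ℕ} (h : 2 ^ 2 ∣ 2 ^ (2 + c)) :
    IsCyclic (ZMod.unitsMap h).ker := by
  have isUnit_five : IsUnit (5 : ZMod (2 ^ (2 + c))) :=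
    (ZMod.isUnit_iff_coprime 5 _).2 (Nat.Coprime.pow_right _ (by norm_num))
  obtain ⟨u, hu⟩ := isUnit_five
  have u_mem : u ∈ (ZMod.unitsMap h).ker := by
    rw [MonoidHom.mem_ker]
    ext
    rw [ZMod.unitsMap_val, hu]
    exact (ZMod.cast_natCast h 5).trans (by decide)
  refine isCyclic_of_orderOf_eq_card ⟨u, u_mem⟩ ?_
  rw [card_ker_unitsMap_prime_pow Nat.prime_two two_pos, ← Subgroup.orderOf_coe, ← orderOf_units,
    hu, add_comm 2 c, ZMod.orderOf_five]

theorem autToPow_mem_ker_unitsMap {F K : Type*} [Field F] [Field K] [Algebra F K] {m n : ℕ}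
    [NeZero n] (h : m ∣ n) {η : F} (hη : IsPrimitiveRoot η m) {ζ : K} (hζ : IsPrimitiveRoot ζ n)
    (τ : Gal(K/F)) : hζ.autToPow F τ ∈ (ZMod.unitsMap h).ker := by
  have : NeZero m := ⟨ne_zero_of_dvd_ne_zero (NeZero.ne n) h⟩
  obtain ⟨l, hl⟩ := h
  have hξ : IsPrimitiveRoot (ζ ^ l) m := hζ.pow (NeZero.pos n) (by rw [hl, mul_comm])
  have fixed : τ (ζ ^ l) = ζ ^ l := by
    obtain ⟨i, -, hi⟩ := (hη.map_of_injective (algebraMap F K).injective).eq_pow_of_pow_eq_one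
      hξ.pow_eq_one
    rw [← hi, ← map_pow, AlgEquiv.commutes]
  rw [map_pow, ← hζ.autToPow_spec F τ, pow_right_comm] at fixed
  nth_rw 2 [← pow_one (ζ ^ l)] at fixed
  rw [(hξ.isOfFinOrder (NeZero.ne m)).pow_eq_pow_iff_modEq, ← hξ.eq_orderOf,
    ← ZMod.natCast_eq_natCast_iff] at fixed
  rw [MonoidHom.mem_ker]
  ext
  rw [ZMod.unitsMap_val, Units.val_one, ← ZMod.natCast_val, fixed, Nat.cast_one]

end UnitsMap

section PrimePower
open Filter

variable {F : Type*} [Field F] [NumberField F] {n : ℕ} {x : 𝓞 F}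

theorem IsPowModAlmostAll.of_mul_pow {z : 𝓞 F} (h : IsPowModAlmostAll n (x * z ^ n))
    (hz : z ≠ 0) : IsPowModAlmostAll n x := by
  filter_upwards [h, eventually_notMem_asIdeal hz] with v ⟨y, hy⟩ hzv
  let := Ideal.Quotient.field v.asIdeal
  have z_ne_zero : Ideal.Quotient.mk v.asIdeal z ≠ 0 := mt Ideal.Quotient.eq_zero_iff_mem.1 hzv
  obtain ⟨w, hw⟩ := Ideal.Quotient.mk_surjective
    (Ideal.Quotient.mk v.asIdeal y / Ideal.Quotient.mk v.asIdeal z)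
  refine ⟨w, Ideal.Quotient.eq.1 ?_⟩
  rw [map_pow, hw, div_pow, ← map_pow, Ideal.Quotient.eq.2 hy, map_mul, map_pow,
    mul_div_cancel_right₀ _ (pow_ne_zero n z_ne_zero)]

theorem isPrimitiveRoot_two_pow_succ_of_pow_eq_neg_one {R : Type*} [CommRing R] {a : ℕ} {ζ : R}
    (hR : (-1 : R) ≠ 1) (hζ : ζ ^ 2 ^ a = -1) : IsPrimitiveRoot ζ (2 ^ (a + 1)) := by
  rw [← orderOf_eq_prime_pow (p := 2) (by rwa [hζ])
    (by rw [pow_succ 2 a, pow_mul, hζ, neg_one_sq])]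
  exact IsPrimitiveRoot.orderOf ζ

theorem exists_pow_two_pow_eq_neg_one {a : ℕ} (h : IsPowModAlmostAll (2 ^ a) (-1 : 𝓞 F)) :
    ∃ ζ : F, ζ ^ 2 ^ a = -1 := by
  let L := CyclotomicField (2 ^ (a + 1)) F
  have : NumberField L := IsCyclotomicExtension.numberField {2 ^ (a + 1)} F L
  have : IsGalois F L := IsCyclotomicExtension.isGalois {2 ^ (a + 1)} F L
  have hα := IsCyclotomicExtension.zeta_spec (2 ^ (a + 1)) F L
  set α := IsCyclotomicExtension.zeta (2 ^ (a + 1)) F L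
  have α_pow : α ^ 2 ^ a = -1 :=
    (hα.pow (by positivity) (pow_succ 2 a)).eq_neg_one_of_two_right
  have map_neg_one : algebraMap F L ((-1 : 𝓞 F) : F) = -1 := by simp
  obtain ⟨y, hy⟩ := h.exists_algebraMap_eq_of_forall_mem_adjoin (neg_ne_zero.2 one_ne_zero)
    (hα.pow (by positivity) (pow_succ' 2 a)) (α_pow.trans map_neg_one.symm) (γ := α) fun β hβ => by
      have hβ' := isPrimitiveRoot_two_pow_succ_of_pow_eq_neg_one (by norm_num)
        (hβ.trans map_neg_one)
      obtain ⟨i, -, hi⟩ := hβ'.eq_pow_of_pow_eq_one hα.pow_eq_one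
      rw [← hi]
      exact pow_mem (IntermediateField.mem_adjoin_simple_self F β) i
  exact ⟨y, (algebraMap F L).injective (by rw [map_pow, hy, α_pow, map_neg, map_one])⟩

variable {p b c : ℕ}

theorem IsPowModAlmostAll.exists_pow_eq_of_isCyclic_ker_unitsMap (hp : p.Prime) (hb : 0 < b)
    (hbc : p ^ b ∣ p ^ (b + c)) [IsCyclic (ZMod.unitsMap hbc).ker] {η : F}
    (hη : IsPrimitiveRoot η (p ^ b)) (h : IsPowModAlmostAll (p ^ (b + c)) x) (hx : x ≠ 0) :
    ∃ y : F, y ^ p ^ (b + c) = x := by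
  have : Fact p.Prime := ⟨hp⟩
  let K := CyclotomicField (p ^ (b + c)) F
  have : NumberField K := IsCyclotomicExtension.numberField {p ^ (b + c)} F K
  have : IsGalois F K := IsCyclotomicExtension.isGalois {p ^ (b + c)} F K
  have hζ := IsCyclotomicExtension.zeta_spec (p ^ (b + c)) F K
  have map_x_ne_zero : algebraMap (𝓞 F) (𝓞 K) x ≠ 0 :=
    (map_ne_zero_iff _ (FaithfulSMul.algebraMap_injective (𝓞 F) (𝓞 K))).2 hx
  obtain ⟨α, hα⟩ := (h.map_algebraMap (K := K)).exists_pow_eq_of_isPrimitiveRoot map_x_ne_zero hζ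
  let toKer : Gal(K/F) →* (ZMod.unitsMap hbc).ker :=
    (hζ.autToPow F).codRestrict _ (autToPow_mem_ker_unitsMap hbc hη hζ)
  have toKer_injective : Function.Injective toKer := fun _ _ hτ =>
    hζ.autToPow_injective F (congrArg Subtype.val hτ)
  have : IsCyclic Gal(K/F) := isCyclic_of_injective toKer toKer_injective
  have := intermediateField_total_of_isCyclic_of_isPGroup
    ((IsPGroup.of_card (card_ker_unitsMap_prime_pow hp hb hbc)).of_injective toKer toKer_injective)
  exact h.exists_pow_eq_of_total hx hζ hα

theorem finrank_cyclotomicField_dvd_totient (F : Type*) [Field F] (m : ℕ) [NeZero m]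
    [NeZero (m : F)] : Module.finrank F (CyclotomicField m F) ∣ m.totient := by
  have := IsCyclotomicExtension.isGalois {m} F (CyclotomicField m F)
  have := IsCyclotomicExtension.finiteDimensional {m} F (CyclotomicField m F)
  rw [← IsGalois.card_aut_eq_finrank, ← ZMod.card_units_eq_totient, ← Nat.card_eq_fintype_card]
  exact Subgroup.card_dvd_of_injective _
    ((IsCyclotomicExtension.zeta_spec m F (CyclotomicField m F)).autToPow_injective F)

theorem IsPowModAlmostAll.exists_pow_totient_eq_pow (hp : p.Prime) (hb : 0 < b)
    (hbc : p ^ b ∣ p ^ (b + c)) [IsCyclic (ZMod.unitsMap hbc).ker]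
    (h : IsPowModAlmostAll (p ^ (b + c)) x) (hx : x ≠ 0) :
    ∃ y : F, (x : F) ^ (p ^ b).totient = y ^ p ^ (b + c) := by
  have : NeZero p := ⟨hp.ne_zero⟩
  let K := CyclotomicField (p ^ b) F
  have : NumberField K := IsCyclotomicExtension.numberField {p ^ b} F K
  obtain ⟨y, hy⟩ := (h.map_algebraMap (K := K)).exists_pow_eq_of_isCyclic_ker_unitsMap hp hb hbc
    (IsCyclotomicExtension.zeta_spec (p ^ b) F K)
    ((map_ne_zero_iff _ (FaithfulSMul.algebraMap_injective (𝓞 F) (𝓞 K))).2 hx)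
  obtain ⟨l, hl⟩ := finrank_cyclotomicField_dvd_totient F (p ^ b)
  have norm_pow : Algebra.norm F y ^ p ^ (b + c) = (x : F) ^ Module.finrank F K := by
    rw [← map_pow, hy]
    exact Algebra.norm_algebraMap (x : F)
  exact ⟨Algebra.norm F y ^ l, by rw [hl, pow_mul, ← norm_pow, pow_right_comm]⟩

theorem IsPowModAlmostAll.exists_pow_eq_of_odd_prime_pow (hp : p.Prime) (hp2 : p ≠ 2) {a : ℕ}
    (h : IsPowModAlmostAll (p ^ a) x) (hx : x ≠ 0) : ∃ y : F, y ^ p ^ a = x := by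
  obtain rfl | ha := a.eq_zero_or_pos
  · exact ⟨x, by rw [pow_zero, pow_one]⟩
  obtain ⟨c, rfl⟩ := Nat.exists_eq_add_of_le ha
  have := ZMod.isCyclic_units_of_prime_pow p hp hp2 (1 + c)
  obtain ⟨y, hy⟩ := h.exists_pow_totient_eq_pow hp one_pos (pow_dvd_pow p ha) hx
  refine (pow_mem_range_pow_of_coprime (Nat.Coprime.pow_right _ ?_) (x : F)).1 ⟨y, hy.symm⟩
  rw [pow_one, Nat.totient_prime hp, Nat.coprime_self_sub_left hp.one_le]
  exact Nat.coprime_one_left p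

theorem IsPowModAlmostAll.exists_pow_eq_of_two_pow_succ {a : ℕ}
    (h : IsPowModAlmostAll (2 ^ (a + 1)) x) (hx : x ≠ 0) : ∃ y : F, y ^ 2 ^ a = x := by
  obtain rfl | ha := a.eq_zero_or_pos
  · exact ⟨x, by rw [pow_zero, pow_one]⟩
  have h_pow : IsPowModAlmostAll (2 ^ a) x := h.of_dvd (pow_dvd_pow 2 a.le_succ)
  obtain ⟨c, hc⟩ := Nat.exists_eq_add_of_le (show 2 ≤ a + 1 by omega)
  have hbc := pow_dvd_pow 2 (Nat.le_add_right 2 c)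
  have := isCyclic_ker_unitsMap_four hbc
  rw [hc] at h
  obtain ⟨y, hy⟩ := h.exists_pow_totient_eq_pow Nat.prime_two two_pos hbc hx
  rw [show Nat.totient (2 ^ 2) = 2 by decide, ← hc, pow_succ 2 a, pow_mul,
    sq_eq_sq_iff_eq_or_eq_neg] at hy
  obtain hy | hy := hy
  · exact ⟨y, hy.symm⟩
  have isIntegral_y : IsIntegral ℤ y := .of_pow (n := 2 ^ a) (by positivity) (by
    rw [← neg_eq_iff_eq_neg.2 hy]
    exact x.isIntegral_coe.neg)
  let z : 𝓞 F := ⟨y, isIntegral_y⟩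
  have x_eq : x = -1 * z ^ 2 ^ a := RingOfIntegers.ext (hy.trans (neg_one_mul _).symm)
  have z_ne_zero : z ≠ 0 := fun hz => hx (by rw [x_eq, hz, zero_pow (by positivity), mul_zero])
  obtain ⟨ζ, hζ⟩ := exists_pow_two_pow_eq_neg_one ((x_eq ▸ h_pow).of_mul_pow z_ne_zero)
  exact ⟨ζ * y, by rw [mul_pow, hζ, hy, neg_one_mul]⟩

theorem IsPowModAlmostAll.exists_pow_eq_of_two_mul {k : ℕ} (hk : 0 < k)
    (h : IsPowModAlmostAll (2 * k) x) (hx : x ≠ 0) : ∃ y : F, y ^ k = x := by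
  induction k using Nat.recOnPosPrimePosCoprime with
  | prime_pow p a hp _ =>
    obtain rfl | hp2 := eq_or_ne p 2
    · rw [← pow_succ'] at h
      exact h.exists_pow_eq_of_two_pow_succ hx
    · exact (h.of_dvd (dvd_mul_left _ _)).exists_pow_eq_of_odd_prime_pow hp hp2 hx
  | zero => exact absurd hk (lt_irrefl 0)
  | one => exact ⟨x, pow_one _⟩
  | coprime a b ha hb hab iha ihb =>
    obtain ⟨y, hy⟩ := iha (by omega) (h.of_dvd (mul_dvd_mul_left 2 (dvd_mul_right a b)))
    obtain ⟨z, hz⟩ := ihb (by omega) (h.of_dvd (mul_dvd_mul_left 2 (dvd_mul_left b a)))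
    obtain ⟨t, rfl, -⟩ := (pow_eq_pow_iff_of_coprime hab).1 (hy.trans hz.symm)
    exact ⟨t, by rw [mul_comm, pow_mul, hy]⟩

end PrimePower

section Completion
open Filter

variable {R : Type*} [CommRing R] [IsDedekindDomain R] {K : Type*} [Field K] [Algebra R K]
  [IsFractionRing R K] (v : HeightOneSpectrum R) {n : ℕ}

theorem exists_valuation_pow_sub_lt_one_of_adicCompletion {x : K}
    {y : v.adicCompletion K} (h : algebraMap K (v.adicCompletion K) x = y ^ n) :
    ∃ t : K, v.valuation K (t ^ n - x) < 1 := by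
  have isOpen_ball : IsOpen {t : v.adicCompletion K |
      Valued.v (t ^ n - algebraMap K (v.adicCompletion K) x) < 1} := by
    have continuous_pow_sub : Continuous fun t : v.adicCompletion K =>
        t ^ n - algebraMap K (v.adicCompletion K) x := (continuous_pow n).sub continuous_const
    have := (Valued.isOpen_ball (v.adicCompletion K) 1).preimage continuous_pow_sub
    simpa only [Valuation.restrict_lt_one_iff, Set.preimage_ofPred_eq] using this
  obtain ⟨t, ht⟩ := (HeightOneSpectrum.denseRange_algebraMap K v).exists_mem_open isOpen_ball
    ⟨y, by simp [h]⟩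
  rw [Set.mem_ofPred_eq, ← map_pow, ← map_sub] at ht
  exact ⟨t, by rwa [← HeightOneSpectrum.valuedAdicCompletion_eq_valuation']⟩

theorem exists_pow_sub_mem_of_valuation_pow_sub_lt_one (hn : n ≠ 0) {x : R} {t : K}
    (ht : v.valuation K (t ^ n - algebraMap R K x) < 1) : ∃ z : R, z ^ n - x ∈ v.asIdeal := by
  have valuation_t_le_one : v.valuation K t ≤ 1 := by
    refine (pow_le_one_iff hn).1 ?_
    rw [← map_pow, ← sub_add_cancel (t ^ n) (algebraMap R K x)]
    exact Valuation.map_add_le _ ht.le (v.valuation_le_one x)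
  obtain ⟨z, hz⟩ := v.exists_valuation_sub_lt_of_integer valuation_t_le_one 1
  have pow_sub_pow_lt_one : v.valuation K (algebraMap R K z ^ n - t ^ n) < 1 := by
    rw [← (Commute.all (algebraMap R K z) t).mul_geom_sum₂ n, map_mul]
    refine mul_lt_one_of_lt_of_le hz (Valuation.map_sum_le _ fun i _ => ?_)
    rw [map_mul, map_pow, map_pow]
    exact mul_le_one' (pow_le_one' (v.valuation_le_one z) _) (pow_le_one' valuation_t_le_one _)
  refine ⟨z, (v.valuation_lt_one_iff_mem (K := K) _).1 ?_⟩
  simpa using Valuation.map_add_lt _ pow_sub_pow_lt_one ht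

theorem isPowModAlmostAll_of_adicCompletion {F : Type*} [Field F] [NumberField F] (hn : n ≠ 0)
    {x : 𝓞 F} (h : ∀ᶠ v : HeightOneSpectrum (𝓞 F) in cofinite, ∃ y : v.adicCompletion F,
      algebraMap F (v.adicCompletion F) x = y ^ n) : IsPowModAlmostAll n x := by
  refine h.mono fun v ⟨y, hy⟩ => ?_
  obtain ⟨t, ht⟩ := exists_valuation_pow_sub_lt_one_of_adicCompletion v hy
  exact exists_pow_sub_mem_of_valuation_pow_sub_lt_one v hn ht

theorem exists_algebraMap_eq_mul_pow (hn : n ≠ 0) (x : K) :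
    ∃ b : R, b ≠ 0 ∧ ∃ z : R, algebraMap R K z = x * algebraMap R K b ^ n := by
  obtain ⟨a, b, hb, rfl⟩ := IsFractionRing.div_surjective R x
  have map_b_ne_zero : algebraMap R K b ≠ 0 :=
    IsFractionRing.to_map_ne_zero_of_mem_nonZeroDivisors hb
  refine ⟨b, nonZeroDivisors.ne_zero hb, a * b ^ (n - 1), ?_⟩
  rw [← mul_pow_sub_one hn (algebraMap R K b), ← mul_assoc, div_mul_cancel₀ _ map_b_ne_zero,
    map_mul, map_pow]

end Completion

theorem kth_power_of_locally_two_kth_power_general {F : Type*} [Field F] [NumberField F] {k : ℕ}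
    (hk : 0 < k) (x : F) (hloc : ∀ᶠ v : HeightOneSpectrum (𝓞 F) in Filter.cofinite,
      ∃ y : v.adicCompletion F, algebraMap F (v.adicCompletion F) x = y ^ (2 * k)) :
    ∃ y : F, x = y ^ k := by
  obtain rfl | x_ne_zero := eq_or_ne x 0
  · exact ⟨0, (zero_pow hk.ne').symm⟩
  have two_mul_ne_zero : 2 * k ≠ 0 := by omega
  obtain ⟨b, b_ne_zero, z, (hz : (z : F) = x * b ^ (2 * k))⟩ :=
    exists_algebraMap_eq_mul_pow (R := 𝓞 F) two_mul_ne_zero x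
  have map_b_ne_zero : (b : F) ≠ 0 := RingOfIntegers.coe_ne_zero_iff.2 b_ne_zero
  have z_ne_zero : z ≠ 0 := RingOfIntegers.coe_ne_zero_iff.1
    (hz.trans_ne (mul_ne_zero x_ne_zero (pow_ne_zero _ map_b_ne_zero)))
  have isPow_z : IsPowModAlmostAll (2 * k) z :=
    isPowModAlmostAll_of_adicCompletion two_mul_ne_zero <| hloc.mono fun v ⟨y, hy⟩ =>
      ⟨y * algebraMap F _ b, by rw [hz, map_mul, hy, map_pow, mul_pow]⟩
  obtain ⟨y, hy⟩ := isPow_z.exists_pow_eq_of_two_mul hk z_ne_zero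
  exact ⟨y / b ^ 2, by
    rw [div_pow, hy, hz, ← pow_mul, mul_div_cancel_right₀ _ (pow_ne_zero _ map_b_ne_zero)]⟩

/-- Let `F` be a number field, `d ≥ 1` and `T = 𝔾_m^d`.  For any positive
integer `k`, every `F`-point of `T` lying in `[2k]T(F_𝔭)` for all finite places `𝔭`
lies in `[k]T(F)`: if `x₁, …, x_d ∈ F^×` are `2k`-th powers in `F_𝔭^×` for every finite
place `𝔭`, then each `x_i` is a `k`-th power in `F^×`. -/
theorem kth_power_of_locally_two_kth_power
    (F : Type*) [Field F] [NumberField F] (d : ℕ) (hd : 1 ≤ d) (k : ℕ) (hk : 0 < k)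
    (x : Fin d → Fˣ)
    (hloc : ∀ i : Fin d, ∀ v : HeightOneSpectrum (𝓞 F),
      ∃ y : (v.adicCompletion F)ˣ,
        algebraMap F (v.adicCompletion F) (x i : F) = (y : v.adicCompletion F) ^ (2 * k)) :
    ∀ i : Fin d, ∃ y : Fˣ, x i = y ^ k := by
  intro i
  obtain ⟨y, hy⟩ := kth_power_of_locally_two_kth_power_general hk (x i : F)
    (Filter.Eventually.of_forall fun v => (hloc i v).imp' _ fun _ h => h)
  have y_ne_zero : y ≠ 0 := ne_zero_pow hk.ne' (hy ▸ (x i).ne_zero)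
  exact ⟨Units.mk0 y y_ne_zero, Units.ext hy⟩
end

section
/- Let l ≡ −1 (mod 8) be prime, F = ℚ(√(−2l)), E = F(i), 𝔩 the prime of F above l, and 𝔏 the prime of E above 𝔩, so E_𝔏 = ℚ_l(i, √l) and F_𝔩 = ℚ_l(√(−2l)). For ξ ∈ E_𝔏^×: if N_{E_𝔏/F_𝔩}(ξ) = 1 then the local Hilbert symbols satisfy (ξ, √l)_𝔏 = (ξ, −√l)_𝔏 = 1; if N_{E_𝔏/F_𝔩}(ξ) = −1 then (ξ, √l)_𝔏 = (ξ, −√l)_𝔏 = −1. -/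
/-- The quadratic Hilbert symbol `(a, b)_K` of a field `K` equals `1` iff
`z² = a·x² + b·y²` has a nontrivial solution. -/
def HilbertSymbolOne (K : Type*) [Field K] (a b : K) : Prop :=
  ∃ x y z : K, ¬(x = 0 ∧ y = 0 ∧ z = 0) ∧ z ^ 2 = a * x ^ 2 + b * y ^ 2

/-!
For `p ≡ 3 (mod 4)`, put `F = ℚ_p(r)` with `r² = δ` of odd valuation, and `E = F(i)`. An element
`b` of `E` whose square lies in `ℚ_p` and has odd valuation is `r` times a square, so
`(ξ, b)_E = (ξ, r)_E`. If `N(ξ) = -1`, norm compatibility of Hilbert symbols, applied to `E/F` and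
then to `F/ℚ_p`, leads from `(ξ, r)_E` through `(-1, r)_F` to `(-1, -δ)_p = -1`. If `N(ξ) = 1`, then
`ξ` is up to sign `y² / N(y)` for some `y`; as `N_{F/ℚ_p}(N(y))` is the square of an element of
`ℚ_p`, `N(y)` is a square of `F` times an element of `ℚ_p`. All elements of `ℚ_p` are squares in
`E`, hence so is `ξ`.
-/

namespace HilbertSymbolOne

variable {K : Type*} [Field K] {a b : K}

theorem of_isSquare_left (ha : IsSquare a) (b : K) : HilbertSymbolOne K a b := by
  obtain ⟨c, rfl⟩ := ha
  exact ⟨1, 0, c, by simp, by ring⟩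

theorem of_eq_sq_sub_mul_sq {z y : K} (h : a = z ^ 2 - b * y ^ 2) : HilbertSymbolOne K a b :=
  ⟨1, y, z, by simp, by linear_combination -h⟩

theorem symm (h : HilbertSymbolOne K a b) : HilbertSymbolOne K b a := by
  obtain ⟨x, y, z, hne, he⟩ := h
  exact ⟨y, x, z, by tauto, by rw [he, add_comm]⟩

theorem mul_sq_right (h : HilbertSymbolOne K a b) {t : K} (ht : t ≠ 0) :
    HilbertSymbolOne K a (b * t ^ 2) := by
  obtain ⟨x, y, z, hne, he⟩ := h
  refine ⟨x, y / t, z, by simpa [ht] using hne, ?_⟩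
  field_simp
  exact he

theorem isSquare_or_exists_eq_sq_sub_mul_sq (h : HilbertSymbolOne K a b) :
    IsSquare b ∨ ∃ z y : K, a = z ^ 2 - b * y ^ 2 := by
  obtain ⟨x, y, z, hne, he⟩ := h
  by_cases hx : x = 0
  · subst hx
    have hy : y ≠ 0 := by
      rintro rfl
      simp_all
    refine Or.inl ⟨z / y, ?_⟩
    field_simp
    linear_combination -he
  · refine Or.inr ⟨z / x, y / x, ?_⟩
    field_simp
    linear_combination -he

end HilbertSymbolOne

/-- `L` is the quadratic extension `F(√d)`, and `s` is the chosen square root of `d`. -/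
structure IsAdjoinSqrt {F L : Type*} [Field F] [Field L] [Algebra F L] (d : F) (s : L) : Prop where
  sq_eq : s ^ 2 = algebraMap F L d
  not_isSquare : ¬ IsSquare d
  adjoin_eq_top : Algebra.adjoin F {s} = ⊤

namespace IsAdjoinSqrt

variable {F L : Type*} [Field F] [Field L] [Algebra F L] {d : F} {s : L}

theorem of_finrank_eq_two (hs : s ^ 2 = algebraMap F L d) (hd : ¬ IsSquare d)
    (h2 : Module.finrank F L = 2) : IsAdjoinSqrt d s where
  sq_eq := hs
  not_isSquare := hd
  adjoin_eq_top := by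
    have := Subalgebra.isSimpleOrder_of_finrank h2
    refine (eq_bot_or_eq_top _).resolve_left fun hbot => hd ?_
    obtain ⟨c, rfl⟩ := Algebra.mem_bot.mp (hbot ▸ Algebra.self_mem_adjoin_singleton F s)
    exact ⟨c, (algebraMap F L).injective (by rw [← hs, map_mul, sq])⟩

theorem exists_algEquiv (h : IsAdjoinSqrt d s) :
    ∃ e : QuadraticAlgebra F d 0 ≃ₐ[F] L,
      ∀ a b, e ⟨a, b⟩ = algebraMap F L a + algebraMap F L b * s := by
  have : Fact (∀ r : F, r ^ 2 ≠ d + 0 * r) :=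
    ⟨fun r hr => h.not_isSquare ⟨r, by linear_combination -hr⟩⟩
  let f : QuadraticAlgebra F d 0 →ₐ[F] L := QuadraticAlgebra.lift
    ⟨s, by rw [zero_smul, add_zero, ← sq, h.sq_eq, Algebra.algebraMap_eq_smul_one]⟩
  have hf : ∀ a b, f ⟨a, b⟩ = algebraMap F L a + algebraMap F L b * s := fun a b => by
    simp [f, Algebra.smul_def]
  have hsurj : Function.Surjective f := by
    rw [← AlgHom.range_eq_top, eq_top_iff, ← h.adjoin_eq_top, Algebra.adjoin_le_iff,
      Set.singleton_subset_iff]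
    exact ⟨⟨0, 1⟩, by simp [hf]⟩
  exact ⟨AlgEquiv.ofBijective f ⟨f.toRingHom.injective, hsurj⟩, hf⟩

theorem exists_eq_add_mul (h : IsAdjoinSqrt d s) (x : L) :
    ∃ a b : F, x = algebraMap F L a + algebraMap F L b * s := by
  obtain ⟨e, he⟩ := h.exists_algEquiv
  obtain ⟨⟨a, b⟩, rfl⟩ := e.surjective x
  exact ⟨a, b, he a b⟩

theorem add_mul_inj (h : IsAdjoinSqrt d s) {a b a' b' : F} :
    algebraMap F L a + algebraMap F L b * s = algebraMap F L a' + algebraMap F L b' * s ↔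
      a = a' ∧ b = b' := by
  obtain ⟨e, he⟩ := h.exists_algEquiv
  rw [← he, ← he, e.injective.eq_iff, QuadraticAlgebra.mk.injEq]

theorem norm_add_mul (h : IsAdjoinSqrt d s) (a b : F) :
    Algebra.norm F (algebraMap F L a + algebraMap F L b * s) = a ^ 2 - d * b ^ 2 := by
  obtain ⟨e, he⟩ := h.exists_algEquiv
  have hdet : Algebra.norm F (⟨a, b⟩ : QuadraticAlgebra F d 0) = QuadraticAlgebra.norm ⟨a, b⟩ :=
    QuadraticAlgebra.det_toLinearMap_eq_norm _
  rw [← he, Algebra.norm_eq_of_algEquiv, hdet, QuadraticAlgebra.norm_def]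
  ring

theorem norm_algebraMap (h : IsAdjoinSqrt d s) (a : F) :
    Algebra.norm F (algebraMap F L a) = a ^ 2 := by
  simpa using h.norm_add_mul a 0

theorem norm_self (h : IsAdjoinSqrt d s) : Algebra.norm F s = -d := by
  simpa using h.norm_add_mul 0 1

theorem exists_eq_add_of_isSquare_algebraMap (h : IsAdjoinSqrt d s) {c : F}
    (hc : IsSquare (algebraMap F L c)) : ∃ a b : F, c = a ^ 2 + d * b ^ 2 ∧ 2 * a * b = 0 := by
  obtain ⟨x, hx⟩ := hc
  obtain ⟨a, b, rfl⟩ := h.exists_eq_add_mul x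
  refine ⟨a, b, h.add_mul_inj (b := 0) (b' := 2 * a * b) |>.mp ?_ |>.imp_right Eq.symm⟩
  simp only [map_add, map_mul, map_pow, map_zero, map_ofNat]
  linear_combination hx + algebraMap F L b ^ 2 * h.sq_eq

theorem isSquare_or_isSquare_mul [NeZero (2 : F)] (h : IsAdjoinSqrt d s) {c : F}
    (hc : IsSquare (algebraMap F L c)) : IsSquare c ∨ IsSquare (d * c) := by
  obtain ⟨a, b, rfl, hab⟩ := h.exists_eq_add_of_isSquare_algebraMap hc
  rcases (by simpa [two_ne_zero] using hab : a = 0 ∨ b = 0) with rfl | rfl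
  · exact Or.inr ⟨d * b, by ring⟩
  · exact Or.inl ⟨a, by ring⟩

theorem hilbertSymbolOne_norm (h : IsAdjoinSqrt d s) {ξ : L} {c : F}
    (hξ : HilbertSymbolOne L ξ (algebraMap F L c)) :
    HilbertSymbolOne F (Algebra.norm F ξ) c := by
  rcases hξ.isSquare_or_exists_eq_sq_sub_mul_sq with hc | ⟨z, y, rfl⟩
  · obtain ⟨a, b, rfl, hab⟩ := h.exists_eq_add_of_isSquare_algebraMap hc
    obtain ⟨A, B, rfl⟩ := h.exists_eq_add_mul ξ
    rw [h.norm_add_mul]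
    by_cases hb : b = 0
    · exact (HilbertSymbolOne.of_isSquare_left ⟨a, by rw [hb]; ring⟩ _).symm
    · refine .of_eq_sq_sub_mul_sq (z := A + a * B / b) (y := B / b) ?_
      field_simp
      linear_combination -(A * B) * hab
  · -- The norm of `z² - c y²` is computed by taking the norm of `z + y √c` to `F(√c)` first.
    obtain ⟨A, B, rfl⟩ := h.exists_eq_add_mul z
    obtain ⟨C, D, rfl⟩ := h.exists_eq_add_mul y
    have hexpand : (algebraMap F L A + algebraMap F L B * s) ^ 2 -
          algebraMap F L c * (algebraMap F L C + algebraMap F L D * s) ^ 2 =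
        algebraMap F L (A ^ 2 + d * B ^ 2 - c * (C ^ 2 + d * D ^ 2)) +
          algebraMap F L (2 * (A * B - c * (C * D))) * s := by
      simp only [map_add, map_sub, map_mul, map_pow, map_ofNat]
      linear_combination (algebraMap F L B ^ 2 - algebraMap F L c * algebraMap F L D ^ 2) * h.sq_eq
    refine .of_eq_sq_sub_mul_sq (z := A ^ 2 + c * C ^ 2 - d * (B ^ 2 + c * D ^ 2))
      (y := 2 * (A * C - d * (B * D))) ?_
    rw [hexpand, h.norm_add_mul]
    ring

theorem exists_eq_mul_sq_of_isSquare_norm [NeZero (2 : F)] (h : IsAdjoinSqrt d s) {x : L}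
    (hx : IsSquare (Algebra.norm F x)) : ∃ (c : F) (y : L), x = algebraMap F L c * y ^ 2 := by
  obtain ⟨e, he⟩ := hx
  obtain ⟨a, b, rfl⟩ := h.exists_eq_add_mul x
  rw [h.norm_add_mul] at he
  by_cases hae : a + e = 0
  · have hd : d ≠ 0 := fun h0 => h.not_isSquare (h0 ▸ IsSquare.zero)
    have hdb : d * b ^ 2 = 0 := by linear_combination (a - e) * hae - he
    obtain rfl : b = 0 := by simpa [hd] using hdb
    exact ⟨a, 1, by simp⟩
  · have h2 : algebraMap F L (2 * (a + e)) ≠ 0 :=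
      (map_ne_zero _).mpr (mul_ne_zero two_ne_zero hae)
    refine ⟨(2 * (a + e))⁻¹, algebraMap F L (a + e) + algebraMap F L b * s, ?_⟩
    rw [map_inv₀, eq_inv_mul_iff_mul_eq₀ h2]
    have he' := congrArg (algebraMap F L) he
    simp only [map_add, map_sub, map_mul, map_pow, map_ofNat] at he' ⊢
    linear_combination he' - algebraMap F L b ^ 2 * h.sq_eq

theorem isSquare_of_norm_eq_one [NeZero (2 : F)] (h : IsAdjoinSqrt d s)
    (hneg : IsSquare (-1 : L)) (hnorm : ∀ y : L, IsSquare (algebraMap F L (Algebra.norm F y)))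
    {ξ : L} (hξ : Algebra.norm F ξ = 1) : IsSquare ξ := by
  obtain ⟨c, y, rfl⟩ := h.exists_eq_mul_sq_of_isSquare_norm (hξ ▸ IsSquare.one)
  have hcy : (c * Algebra.norm F y) ^ 2 = 1 := by
    rw [← hξ, map_mul, map_pow, h.norm_algebraMap, mul_pow]
  refine IsSquare.mul ?_ (IsSquare.sq y)
  have hc : IsSquare (algebraMap F L (c * Algebra.norm F y)) := by
    rcases sq_eq_one_iff.mp hcy with h1 | h1 <;> simp [h1, hneg]
  have hy : Algebra.norm F y ≠ 0 := by
    intro h0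
    simp [h0] at hcy
  simpa [hy] using hc.div (hnorm y)

end IsAdjoinSqrt

section Tower

variable {K F E : Type*} [Field K] [Field F] [Field E] [Algebra K F] [Algebra F E]
  {δ : K} {r : F} {i : E}

theorem isSquare_algebraMap_norm [NeZero (2 : K)] [Algebra K E] [IsScalarTower K F E]
    (hF : IsAdjoinSqrt δ r) (hE : IsAdjoinSqrt (-1 : F) i)
    (hK : ∀ c : K, IsSquare (algebraMap K E c))
    (hsymbol : ∀ q : K, HilbertSymbolOne K q (-1) → IsSquare q ∨ IsSquare (-q))
    (hδ : ¬ HilbertSymbolOne K δ (-1)) (y : E) :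
    IsSquare (algebraMap F E (Algebra.norm F y)) := by
  have hy : HilbertSymbolOne F (Algebra.norm F y) (algebraMap K F (-1)) := by
    obtain ⟨a, b, rfl⟩ := hE.exists_eq_add_mul y
    exact .of_eq_sq_sub_mul_sq (z := a) (y := b) (by rw [hE.norm_add_mul, map_neg, map_one])
  generalize Algebra.norm F y = ν at hy ⊢
  rcases hsymbol _ (hF.hilbertSymbolOne_norm hy) with hν | ⟨e, he⟩
  · obtain ⟨c, w, rfl⟩ := hF.exists_eq_mul_sq_of_isSquare_norm hν
    rw [map_mul, map_pow, ← IsScalarTower.algebraMap_apply]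
    exact (hK c).mul (IsSquare.sq _)
  · obtain ⟨m, n, rfl⟩ := hF.exists_eq_add_mul ν
    rw [hF.norm_add_mul] at he
    by_cases hmn : m = 0 ∧ n = 0
    · simp [hmn]
    · exact absurd ⟨n, e, m, by tauto, by linear_combination -he⟩ hδ

theorem not_hilbertSymbolOne_of_norm_eq_neg_one (hF : IsAdjoinSqrt δ r)
    (hE : IsAdjoinSqrt (-1 : F) i) (hδ : ¬ HilbertSymbolOne K (-δ) (-1)) {ξ : E}
    (hξ : Algebra.norm F ξ = -1) : ¬ HilbertSymbolOne E ξ (algebraMap F E r) := by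
  intro hξr
  have hr : HilbertSymbolOne F r (algebraMap K F (-1)) := by
    simpa [hξ] using (hE.hilbertSymbolOne_norm hξr).symm
  exact hδ (hF.norm_self ▸ hF.hilbertSymbolOne_norm hr)

end Tower

theorem isSquare_of_sq_eq_neg_one {E : Type*} [Field E] [NeZero (2 : E)] (h2 : IsSquare (2 : E))
    {i : E} (hi : i ^ 2 = -1) : IsSquare i := by
  have hi2 : i = (1 + i) ^ 2 / 2 := by
    field_simp
    linear_combination -hi
  exact hi2 ▸ (IsSquare.sq _).div h2

theorem isSquare_of_sq_eq_algebraMap {K E : Type*} [Field K] [Field E] [Algebra K E]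
    [NeZero (2 : E)] (hK : ∀ c : K, IsSquare (algebraMap K E c)) {i : E} (hi : i ^ 2 = -1)
    {q : K} (hq : IsSquare q ∨ IsSquare (-q)) {x : E} (hx : x ^ 2 = algebraMap K E q) :
    IsSquare x := by
  have hisq : IsSquare i := isSquare_of_sq_eq_neg_one (map_ofNat (algebraMap K E) 2 ▸ hK 2) hi
  have hneg : IsSquare (-1 : E) := ⟨i, by rw [← hi, sq]⟩
  suffices ∃ y : E, IsSquare y ∧ x ^ 2 = y ^ 2 by
    obtain ⟨y, hy, hxy⟩ := this
    rcases sq_eq_sq_iff_eq_or_eq_neg.mp hxy with rfl | rfl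
    · exact hy
    · simpa using hneg.mul hy
  rcases hq with ⟨w, hw⟩ | ⟨w, hw⟩
  · exact ⟨algebraMap K E w, hK w, by rw [hx, hw, map_mul, sq]⟩
  · refine ⟨i * algebraMap K E w, hisq.mul (hK w), ?_⟩
    rw [hx, mul_pow, hi, ← map_pow, sq, ← hw, map_neg, neg_one_mul, neg_neg]

theorem isSquare_or_isSquare_neg_of_finite {k : Type*} [Field k] [Finite k]
    (h : ¬ IsSquare (-1 : k)) (x : k) : IsSquare x ∨ IsSquare (-x) := by
  classical
  have := Fintype.ofFinite k
  by_contra! hx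
  rw [← quadraticChar_neg_one_iff_not_isSquare] at h
  simp only [← quadraticChar_neg_one_iff_not_isSquare] at hx
  have hmul := map_mul (quadraticChar k) (-1) x
  rw [neg_one_mul, h, hx.1, hx.2] at hmul
  norm_num at hmul

theorem isSquare_of_sq_sub_mem {R : Type*} [CommRing R] {I : Ideal R} [HenselianRing R I] {a u : R}
    (h2a : IsUnit (2 * a)) (hau : a ^ 2 - u ∈ I) : IsSquare u := by
  obtain ⟨z, hz, -⟩ := HenselianRing.is_henselian (I := I) (.X ^ 2 - .C u)
    (Polynomial.monic_X_pow_sub_C u two_ne_zero) a (by simpa using hau)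
    (by simpa [one_add_one_eq_two] using h2a.map (Ideal.Quotient.mk I))
  exact ⟨z, by simpa [sub_eq_zero, sq, eq_comm] using hz⟩

section Padic

variable {p : ℕ} [Fact p.Prime]

theorem isUnit_iff_toZMod_ne_zero (x : ℤ_[p]) : IsUnit x ↔ PadicInt.toZMod x ≠ 0 := by
  rw [ne_eq, ← RingHom.mem_ker, PadicInt.ker_toZMod, IsLocalRing.mem_maximalIdeal, mem_nonunits_iff,
    not_not]

theorem isSquare_of_isSquare_toZMod (hp : p ≠ 2) {u : ℤ_[p]} (hu : IsUnit u)
    (h : IsSquare (PadicInt.toZMod u)) : IsSquare u := by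
  obtain ⟨c, hc⟩ := h
  obtain ⟨a, rfl⟩ := ZMod.ringHom_surjective (PadicInt.toZMod (p := p)) c
  rw [isUnit_iff_toZMod_ne_zero, hc] at hu
  have h2 : (2 : ZMod p) ≠ 0 := Ring.two_ne_zero (by rwa [ZMod.ringChar_zmod_n])
  refine isSquare_of_sq_sub_mem (I := IsLocalRing.maximalIdeal ℤ_[p]) (a := a) ?_ ?_
  · rw [isUnit_iff_toZMod_ne_zero, map_mul, map_ofNat]
    exact mul_ne_zero h2 (left_ne_zero_of_mul hu)
  · rw [← PadicInt.ker_toZMod, RingHom.mem_ker, map_sub, map_pow, hc, sq, sub_self]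

theorem norm_eq_one_iff_valuation_eq_zero {q : ℚ_[p]} (hq : q ≠ 0) :
    ‖q‖ = 1 ↔ q.valuation = 0 := by
  have hp := (Fact.out : p.Prime).one_lt
  rw [Padic.norm_eq_zpow_neg_valuation hq, zpow_eq_one_iff_right₀ (by positivity)
    (by exact_mod_cast hp.ne'), neg_eq_zero]

theorem ne_zero_of_odd_valuation {q : ℚ_[p]} (hq : Odd q.valuation) : q ≠ 0 := by
  rintro rfl
  simp at hq

theorem padicValuation_neg (q : ℚ_[p]) : (-q).valuation = q.valuation := by
  by_cases hq : q = 0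
  · simp [hq]
  have hneg : (-1 : ℚ_[p]).valuation = 0 :=
    (norm_eq_one_iff_valuation_eq_zero (by simp)).mp (by simp)
  rw [← neg_one_mul, Padic.valuation_mul (by simp) hq, hneg, zero_add]

theorem even_valuation_div {q₁ q₂ : ℚ_[p]} (h₁ : Odd q₁.valuation) (h₂ : Odd q₂.valuation) :
    Even (q₁ / q₂).valuation := by
  rw [div_eq_mul_inv, Padic.valuation_mul (ne_zero_of_odd_valuation h₁)
    (inv_ne_zero (ne_zero_of_odd_valuation h₂)), Padic.valuation_inv]
  exact h₁.add_odd h₂.neg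

theorem exists_eq_mul_sq_of_even_valuation {q : ℚ_[p]} (hq : q ≠ 0) (hv : Even q.valuation) :
    ∃ (u : ℤ_[p]) (t : ℚ_[p]), IsUnit u ∧ q = u * t ^ 2 := by
  obtain ⟨k, hk⟩ := hv
  have hp : (p : ℚ_[p]) ≠ 0 := by exact_mod_cast (Fact.out : p.Prime).ne_zero
  have hu : ‖q * ((p : ℚ_[p]) ^ (-k)) ^ 2‖ = 1 := by
    rw [norm_eq_one_iff_valuation_eq_zero (by positivity), Padic.valuation_mul hq (by positivity),
      Padic.valuation_pow, Padic.valuation_zpow, Padic.valuation_p, hk]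
    push_cast
    ring
  refine ⟨⟨_, hu.le⟩, (p : ℚ_[p]) ^ k, PadicInt.isUnit_iff.mpr hu, ?_⟩
  change q = q * ((p : ℚ_[p]) ^ (-k)) ^ 2 * ((p : ℚ_[p]) ^ k) ^ 2
  rw [zpow_neg]
  field_simp

section ModFour

variable (hp : p % 4 = 3)

include hp

theorem isSquare_or_isSquare_neg_of_even_valuation {q : ℚ_[p]} (hv : Even q.valuation) :
    IsSquare q ∨ IsSquare (-q) := by
  by_cases hq : q = 0
  · exact Or.inl (hq ▸ IsSquare.zero)
  obtain ⟨u, t, hu, rfl⟩ := exists_eq_mul_sq_of_even_valuation hq hv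
  have hlift : ∀ x : ℤ_[p], IsUnit x → IsSquare (PadicInt.toZMod x) →
      IsSquare ((x : ℚ_[p]) * t ^ 2) := fun x hx hsq =>
    ((isSquare_of_isSquare_toZMod (by lia) hx hsq).map PadicInt.Coe.ringHom).mul (IsSquare.sq t)
  refine (isSquare_or_isSquare_neg_of_finite (fun h => ZMod.exists_sq_eq_neg_one_iff.mp h hp)
    (PadicInt.toZMod u)).imp (hlift u hu) fun hneg => ?_
  simpa using hlift (-u) hu.neg (by rwa [map_neg])

theorem norm_sq_add_one_eq_one {c : ℚ_[p]} (hc : ‖c‖ ≤ 1) : ‖c ^ 2 + 1‖ = 1 := by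
  let x : ℤ_[p] := ⟨c, hc⟩
  have hunit : IsUnit (x ^ 2 + 1) := by
    rw [isUnit_iff_toZMod_ne_zero, map_add, map_pow, map_one]
    exact fun h0 => ZMod.mod_four_ne_three_of_sq_eq_neg_one (eq_neg_of_add_eq_zero_left h0) hp
  exact PadicInt.isUnit_iff.mp hunit

theorem not_isSquare_neg_one : ¬ IsSquare (-1 : ℚ_[p]) := by
  rintro ⟨c, hc⟩
  have hnorm : ‖c‖ ^ 2 = 1 := by rw [← norm_pow, sq, ← hc, norm_neg, norm_one]
  have hone := norm_sq_add_one_eq_one hp (sq_le_one_iff₀ (norm_nonneg c) |>.mp hnorm.le)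
  simp [sq, ← hc] at hone

theorem even_valuation_sq_add_sq (u v : ℚ_[p]) : Even (u ^ 2 + v ^ 2).valuation := by
  wlog huv : ‖u‖ ≤ ‖v‖ generalizing u v
  · rw [add_comm]
    exact this v u (le_of_not_ge huv)
  by_cases hv : v = 0
  · obtain rfl : u = 0 := by simpa [hv] using huv
    simp [hv]
  have hone : ‖(u / v) ^ 2 + 1‖ = 1 := norm_sq_add_one_eq_one hp (by
    rw [norm_div]
    exact div_le_one_of_le₀ huv (norm_nonneg v))
  have hne : (u / v) ^ 2 + 1 ≠ 0 := norm_ne_zero_iff.mp (by simp [hone])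
  have hfactor : u ^ 2 + v ^ 2 = v ^ 2 * ((u / v) ^ 2 + 1) := by field_simp
  rw [hfactor, Padic.valuation_mul (by positivity) hne,
    (norm_eq_one_iff_valuation_eq_zero hne).mp hone, Padic.valuation_pow]
  simp

theorem even_valuation_of_hilbertSymbolOne_neg_one {q : ℚ_[p]}
    (hq : HilbertSymbolOne ℚ_[p] q (-1)) : Even q.valuation := by
  obtain ⟨z, y, rfl⟩ := hq.isSquare_or_exists_eq_sq_sub_mul_sq.resolve_left
    (not_isSquare_neg_one hp)
  simpa using even_valuation_sq_add_sq hp z y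

theorem isSquare_algebraMap_of_odd_valuation {E : Type*} [Field E] [Algebra ℚ_[p] E]
    (hneg : IsSquare (-1 : E)) {δ : ℚ_[p]} (hδ : Odd δ.valuation)
    (hδE : IsSquare (algebraMap ℚ_[p] E δ)) (q : ℚ_[p]) : IsSquare (algebraMap ℚ_[p] E q) := by
  have heven : ∀ q : ℚ_[p], Even q.valuation → IsSquare (algebraMap ℚ_[p] E q) := fun q hq => by
    rcases isSquare_or_isSquare_neg_of_even_valuation hp hq with hs | hs
    · exact hs.map _
    · simpa using hneg.mul (hs.map (algebraMap ℚ_[p] E))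
  rcases Int.even_or_odd q.valuation with hq | hq
  · exact heven q hq
  · rw [← div_mul_cancel₀ q (ne_zero_of_odd_valuation hδ), map_mul]
    exact (heven _ (even_valuation_div hq hδ)).mul hδE

theorem exists_eq_mul_sq_of_odd_valuation {E : Type*} [Field E] [Algebra ℚ_[p] E]
    {i : E} (hi : i ^ 2 = -1) {β δ : ℚ_[p]} (hβ : Odd β.valuation) (hδ : Odd δ.valuation)
    {b r : E} (hb : b ^ 2 = algebraMap ℚ_[p] E β) (hr : r ^ 2 = algebraMap ℚ_[p] E δ) :
    ∃ t : E, t ≠ 0 ∧ r = b * t ^ 2 := by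
  have : CharZero E := charZero_of_injective_algebraMap (algebraMap ℚ_[p] E).injective
  have hsquares := isSquare_algebraMap_of_odd_valuation hp ⟨i, by rw [← hi, sq]⟩ hδ
    ⟨r, by rw [← hr, sq]⟩
  have hne : ∀ {q : ℚ_[p]} {x : E}, Odd q.valuation → x ^ 2 = algebraMap ℚ_[p] E q → x ≠ 0 := by
    rintro q x hq hx rfl
    exact ne_zero_of_odd_valuation hq (by simpa using hx.symm)
  have hb0 := hne hβ hb
  obtain ⟨t, ht⟩ := isSquare_of_sq_eq_algebraMap hsquares hi
    (isSquare_or_isSquare_neg_of_even_valuation hp (even_valuation_div hδ hβ))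
    (show (r / b) ^ 2 = _ by rw [div_pow, hr, hb, map_div₀])
  refine ⟨t, ?_, by rw [sq, ← ht, mul_div_cancel₀ r hb0]⟩
  rintro rfl
  exact div_ne_zero (hne hδ hr) hb0 (by simpa using ht)

theorem hilbert_symbol_at_prime_above_l_general {F E : Type*} [Field F] [Algebra ℚ_[p] F]
    [Field E] [Algebra ℚ_[p] E] [Algebra F E] [IsScalarTower ℚ_[p] F E]
    {δ : ℚ_[p]} (hδ : Odd δ.valuation) {r : F} (hr : r ^ 2 = algebraMap ℚ_[p] F δ)
    (hF : Algebra.adjoin ℚ_[p] {r} = ⊤) (hquad : Module.finrank F E = 2)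
    {i : E} (hi : i ^ 2 = -1) {β : ℚ_[p]} (hβ : Odd β.valuation)
    {b : E} (hb : b ^ 2 = algebraMap ℚ_[p] E β) (ξ : E) :
    (Algebra.norm F ξ = 1 → HilbertSymbolOne E ξ b) ∧
      (Algebra.norm F ξ = -1 → ¬ HilbertSymbolOne E ξ b) := by
  have : CharZero F := charZero_of_injective_algebraMap (algebraMap ℚ_[p] F).injective
  have hδ1 : ¬ HilbertSymbolOne ℚ_[p] δ (-1) := fun h =>
    Int.not_even_iff_odd.mpr hδ (even_valuation_of_hilbertSymbolOne_neg_one hp h)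
  have hδ2 : ¬ HilbertSymbolOne ℚ_[p] (-δ) (-1) := fun h =>
    Int.not_even_iff_odd.mpr hδ
      (padicValuation_neg δ ▸ even_valuation_of_hilbertSymbolOne_neg_one hp h)
  have hFsqrt : IsAdjoinSqrt δ r := ⟨hr, fun h => hδ1 (.of_isSquare_left h _), hF⟩
  have hnegF : ¬ IsSquare (-1 : F) := fun h => by
    rcases hFsqrt.isSquare_or_isSquare_mul (c := -1) (by simpa using h) with h1 | h1
    · exact not_isSquare_neg_one hp h1
    · exact hδ2 (.of_isSquare_left (by simpa using h1) _)
  have hEsqrt : IsAdjoinSqrt (-1 : F) i := .of_finrank_eq_two (by simpa using hi) hnegF hquad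
  have hrE : algebraMap F E r ^ 2 = algebraMap ℚ_[p] E δ := by
    rw [← map_pow, hr, ← IsScalarTower.algebraMap_apply]
  have hnegE : IsSquare (-1 : E) := ⟨i, by rw [← hi, sq]⟩
  refine ⟨fun hξ => ?_, fun hξ h => ?_⟩
  · refine .of_isSquare_left (hEsqrt.isSquare_of_norm_eq_one hnegE ?_ hξ) b
    exact isSquare_algebraMap_norm hFsqrt hEsqrt
      (isSquare_algebraMap_of_odd_valuation hp hnegE hδ ⟨_, by rw [← hrE, sq]⟩)
      (fun q hq => isSquare_or_isSquare_neg_of_even_valuation hp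
        (even_valuation_of_hilbertSymbolOne_neg_one hp hq)) hδ1
  · obtain ⟨t, ht, hrt⟩ := exists_eq_mul_sq_of_odd_valuation hp hi hβ hδ hb hrE
    exact not_hilbertSymbolOne_of_norm_eq_neg_one hFsqrt hEsqrt hδ2 hξ
      (hrt ▸ h.mul_sq_right ht)

end ModFour

theorem valuation_neg_two_mul_self (hp : p ≠ 2) : (-((2 * p : ℕ) : ℚ_[p])).valuation = 1 := by
  have hprime : p.Prime := Fact.out
  have : Fact (Nat.Prime 2) := ⟨Nat.prime_two⟩
  rw [padicValuation_neg, Padic.valuation_natCast, padicValNat.mul two_ne_zero hprime.ne_zero,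
    padicValNat_primes hp, padicValNat_self, zero_add, Nat.cast_one]

end Padic

/-- Let `l ≡ −1 (mod 8)` be prime, `F_𝔩 = ℚ_l(√(−2l))` and
`E_𝔏 = ℚ_l(i, √l)`, a quadratic extension of `F_𝔩`.  For `ξ ∈ E_𝔏^×`: if
`N_{E_𝔏/F_𝔩}(ξ) = 1` then `(ξ, √l)_𝔏 = (ξ, −√l)_𝔏 = 1`, and if
`N_{E_𝔏/F_𝔩}(ξ) = −1` then `(ξ, √l)_𝔏 = (ξ, −√l)_𝔏 = −1`. -/
theorem hilbert_symbol_at_prime_above_l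
    (l : ℕ) [Fact (Nat.Prime l)] (hl8 : l % 8 = 7)
    (Fl : Type*) [Field Fl] [Algebra ℚ_[l] Fl]
    (r : Fl) (hr : r ^ 2 = -((2 * l : ℕ) : Fl))
    (hFl : Algebra.adjoin ℚ_[l] {r} = ⊤)
    (E : Type*) [Field E] [Algebra ℚ_[l] E] [Algebra Fl E] [IsScalarTower ℚ_[l] Fl E]
    [FiniteDimensional Fl E] (hquad : Module.finrank Fl E = 2)
    (i sq : E) (hi : i ^ 2 = -1) (hsq : sq ^ 2 = (l : E))
    (hE : Algebra.adjoin ℚ_[l] {i, sq} = ⊤)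
    (ξ : E) (hξ : ξ ≠ 0) :
    (Algebra.norm Fl ξ = 1 →
      (HilbertSymbolOne E ξ sq ∧ HilbertSymbolOne E ξ (-sq))) ∧
    (Algebra.norm Fl ξ = -1 →
      (¬ HilbertSymbolOne E ξ sq ∧ ¬ HilbertSymbolOne E ξ (-sq))) := by
  have hp : l % 4 = 3 := by lia
  have hδ : Odd (-((2 * l : ℕ) : ℚ_[l])).valuation := by
    rw [valuation_neg_two_mul_self (by lia)]
    exact odd_one
  have hgeneral {b : E} (hb : b ^ 2 = l) := hilbert_symbol_at_prime_above_l_general hp hδ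
    (by rw [hr, map_neg, map_natCast]) hFl hquad hi (β := l) (by simp) (by simpa using hb) ξ
  have hpos := hgeneral hsq
  have hneg := hgeneral (b := -sq) (by rw [neg_sq, hsq])
  exact ⟨fun hξ => ⟨hpos.1 hξ, hneg.1 hξ⟩, fun hξ => ⟨hpos.2 hξ, hneg.2 hξ⟩⟩
end
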